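/- If Δ is a group containing a subgroup of index 2 that is isomorphic to PSL(2, ℤ[ω]), then Δ is isomorphic to one of the following four groups: PGL(2, ℤ[ω]); the Coxeter group Λ₁ = ⟨x, y, z, w ∣ x², y², z², w², (xy)², (xz)², (xw)³, (yz)³, (yw)³, (zw)³⟩; the group Λ₂ = ⟨x, y, z ∣ x², y², z³, z·y·z⁻¹·y, (zx)³, (xy)⁶⟩; or the direct product PSL(2, ℤ[ω]) × ℤ/2ℤ. -/

import Mathlib

/-- The Eisenstein integers `ℤ[ω]`, the ring of integers of `ℚ(ω)` with
`ω² + ω + 1 = 0`. -/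
abbrev Eisenstein : Type := NumberField.RingOfIntegers (CyclotomicField 3 ℚ)

/-- `PSL(2,R)`: the quotient of `SL(2,R)` by its center. -/
abbrev PSL2 (R : Type*) [CommRing R] : Type _ :=
  Matrix.SpecialLinearGroup (Fin 2) R ⧸
    Subgroup.center (Matrix.SpecialLinearGroup (Fin 2) R)

/-- `PGL(2,R)`: the quotient of `GL(2,R)` by its center. -/
abbrev PGL2 (R : Type*) [CommRing R] : Type _ :=
  Matrix.GeneralLinearGroup (Fin 2) R ⧸
    Subgroup.center (Matrix.GeneralLinearGroup (Fin 2) R)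

/-- Relators of the Coxeter group
`Λ₁ = ⟨x,y,z,w ∣ x², y², z², w², (xy)², (xz)², (xw)³, (yz)³, (yw)³, (zw)³⟩`. -/
def lambda1Rels : Set (FreeGroup (Fin 4)) :=
  let x := FreeGroup.of (0 : Fin 4)
  let y := FreeGroup.of (1 : Fin 4)
  let z := FreeGroup.of (2 : Fin 4)
  let w := FreeGroup.of (3 : Fin 4)
  {x ^ 2, y ^ 2, z ^ 2, w ^ 2, (x * y) ^ 2, (x * z) ^ 2, (x * w) ^ 3,
    (y * z) ^ 3, (y * w) ^ 3, (z * w) ^ 3}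

/-- The Coxeter group `Λ₁`. -/
abbrev Lambda1 : Type := PresentedGroup lambda1Rels

/-- Relators of `Λ₂ = ⟨x,y,z ∣ x², y², z³, z·y·z⁻¹·y, (zx)³, (xy)⁶⟩`. -/
def lambda2Rels : Set (FreeGroup (Fin 3)) :=
  let x := FreeGroup.of (0 : Fin 3)
  let y := FreeGroup.of (1 : Fin 3)
  let z := FreeGroup.of (2 : Fin 3)
  {x ^ 2, y ^ 2, z ^ 3, z * y * z⁻¹ * y, (z * x) ^ 3, (x * y) ^ 6}

/-- The group `Λ₂`. -/
abbrev Lambda2 : Type := PresentedGroup lambda2Rels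

/-!
An extension `Δ` of `C₂` by a centreless group `N` is determined by the class of an automorphism of
`N` in `Out N`; when each class is represented by an involution `θ`, the extension is `N ⋊ C₂` with
`C₂` acting by `θ`. For `N = PSL(2, ℤ[ω])` the outer automorphism group is the Klein four-group
generated by conjugation by `diag(1, -1)` and by complex conjugation. Indeed `N` is generated by
three elements of order three, and the traces of their lifts and products determine the images of
these generators up to conjugation in `PGL₂` and complex conjugation.

The four classes give the four groups. The trivial class gives the direct product and `diag(1, -1)`
gives `PGL₂`, because up to squares the units of `ℤ[ω]` are `1` and `-1`. Complex conjugation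
composed with `diag(1, -1)` gives the Coxeter group `Λ₁`: on the matrices `X ↦ A X Aᴴ` the extension
acts through a root system whose simple roots have positive height, so the map from `Λ₁` is
injective. Finally `Λ₂` maps onto the extension by complex conjugation; a map back, from this
extension to the extension of `Λ₂` by `z ↦ z⁻¹`, is found by realising the latter as a quotient of
`Λ₁`, and shows injectivity.
-/

namespace BianchiPSL2

open Matrix
open scoped MatrixGroups

section InvolutionProduct

variable {N G : Type*} [Group N] [Group G] {θ : MulAut N}

/-- The homomorphism from the cyclic group of order two that sends the generator to `g`. -/
def zmodTwoHom {g : G} (hg : g * g = 1) : Multiplicative (ZMod 2) →* G :=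
  AddMonoidHom.toMultiplicativeLeft
    (ZMod.lift 2 ⟨zmultiplesHom (Additive G) (Additive.ofMul g), by
      simpa [two_zsmul] using congrArg Additive.ofMul hg⟩)

theorem zmodTwoHom_ofAdd_one {g : G} (hg : g * g = 1) :
    zmodTwoHom hg (Multiplicative.ofAdd 1) = g := by
  change Additive.toMul (ZMod.lift 2 _ ((1 : ℤ) : ZMod 2)) = g
  rw [ZMod.lift_coe]
  simp

theorem multiplicative_zmodTwo_cases (u : Multiplicative (ZMod 2)) :
    u = 1 ∨ u = Multiplicative.ofAdd 1 := by
  revert u; decide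

/-- The extension `N ⋊ C₂` in which the generator of `C₂` acts on `N` by the involution `θ`. -/
abbrev InvolutionProduct (hθ : θ * θ = 1) : Type _ :=
  N ⋊[zmodTwoHom hθ] Multiplicative (ZMod 2)

namespace InvolutionProduct

variable {hθ : θ * θ = 1}

/-- The inclusion of the normal factor. -/
def incl : N →* InvolutionProduct hθ := SemidirectProduct.inl

/-- The involution of `InvolutionProduct hθ` that acts on `N` by `θ`. -/
def invol : InvolutionProduct hθ := SemidirectProduct.inr (Multiplicative.ofAdd 1)

theorem invol_mul_self : (invol : InvolutionProduct hθ) * invol = 1 := by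
  rw [invol, ← map_mul, show Multiplicative.ofAdd (1 : ZMod 2) * Multiplicative.ofAdd 1 = 1 by
    decide, map_one]

theorem invol_mul_incl (x : N) :
    (invol : InvolutionProduct hθ) * incl x = incl (θ x) * invol := by
  have h := SemidirectProduct.inl_aut (φ := zmodTwoHom hθ) (Multiplicative.ofAdd 1) x
  rw [zmodTwoHom_ofAdd_one, map_inv] at h
  exact (mul_inv_eq_iff_eq_mul.mp h.symm)

theorem incl_mul_invol_mul_incl_mul_invol (a b : N) :
    (incl a * invol : InvolutionProduct hθ) * (incl b * invol) = incl (a * θ b) := by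
  rw [mul_assoc, ← mul_assoc invol, invol_mul_incl, mul_assoc (incl (θ b)), invol_mul_self,
    mul_one, map_mul]

theorem eq_incl_or_eq_incl_mul_invol (d : InvolutionProduct hθ) :
    (∃ x, d = incl x) ∨ ∃ x, d = incl x * invol := by
  rw [← SemidirectProduct.inl_left_mul_inr_right d]
  rcases multiplicative_zmodTwo_cases d.right with h | h <;> rw [h]
  · exact Or.inl ⟨d.left, by rw [map_one, mul_one]; rfl⟩
  · exact Or.inr ⟨d.left, rfl⟩

theorem eq_top_of_incl_mem {K : Subgroup (InvolutionProduct hθ)} (hincl : ∀ x, incl x ∈ K)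
    (hinvol : invol ∈ K) : K = ⊤ := by
  refine (Subgroup.eq_top_iff' K).mpr fun d => ?_
  obtain ⟨x, rfl⟩ | ⟨x, rfl⟩ := eq_incl_or_eq_incl_mul_invol d
  · exact hincl x
  · exact K.mul_mem (hincl x) hinvol

/-- A homomorphism out of `N ⋊ C₂` amounts to a homomorphism out of `N` together with an
involution of the target that implements `θ`. -/
def lift (f : N →* G) {t : G} (ht : t * t = 1) (hf : ∀ x, t * f x = f (θ x) * t) :
    InvolutionProduct hθ →* G :=
  SemidirectProduct.lift f (zmodTwoHom ht) fun u => by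
    ext x
    rcases multiplicative_zmodTwo_cases u with rfl | rfl
    · simp
    · simp [zmodTwoHom_ofAdd_one, hf]

section Lift

variable {f : N →* G} {t : G} {ht : t * t = 1} {hf : ∀ x, t * f x = f (θ x) * t}

@[simp]
theorem lift_incl (x : N) : lift (hθ := hθ) f ht hf (incl x) = f x :=
  SemidirectProduct.lift_inl ..

@[simp]
theorem lift_invol : lift (hθ := hθ) f ht hf invol = t :=
  (SemidirectProduct.lift_inr ..).trans (zmodTwoHom_ofAdd_one ht)

theorem lift_injective (hinj : Function.Injective f) (htf : t ∉ f.range) :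
    Function.Injective (lift (hθ := hθ) f ht hf) := by
  rw [injective_iff_map_eq_one]
  intro d hd
  obtain ⟨x, rfl⟩ | ⟨x, rfl⟩ := eq_incl_or_eq_incl_mul_invol d
  · rw [lift_incl] at hd
    rw [(map_eq_one_iff f hinj).mp hd, map_one]
  · rw [map_mul, lift_incl, lift_invol] at hd
    exact absurd ⟨x⁻¹, by rw [map_inv, eq_inv_of_mul_eq_one_right hd]⟩ htf

theorem lift_surjective (hcover : ∀ d, d ∈ f.range ∨ d * t ∈ f.range) :
    Function.Surjective (lift (hθ := hθ) f ht hf) := by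
  intro d
  obtain ⟨x, hx⟩ | ⟨x, hx⟩ := hcover d
  · exact ⟨incl x, by rw [lift_incl, hx]⟩
  · exact ⟨incl x * invol, by rw [map_mul, lift_incl, lift_invol, hx, mul_assoc, ht, mul_one]⟩

end Lift

theorem nonempty_mulEquiv {f : N →* G} {t : G} (hinj : Function.Injective f)
    (ht : t * t = 1) (hf : ∀ x, t * f x = f (θ x) * t) (htf : t ∉ f.range)
    (hcover : ∀ d, d ∈ f.range ∨ d * t ∈ f.range) :
    Nonempty (G ≃* InvolutionProduct hθ) :=
  ⟨(MulEquiv.ofBijective (lift f ht hf) ⟨lift_injective hinj htf, lift_surjective hcover⟩).symm⟩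

theorem nonempty_mulEquiv_prod (h1 : θ = 1) :
    Nonempty (InvolutionProduct hθ ≃* N × Multiplicative (ZMod 2)) := by
  subst h1
  have hsq : Multiplicative.ofAdd (1 : ZMod 2) * Multiplicative.ofAdd 1 = 1 := by decide
  refine (nonempty_mulEquiv (f := MonoidHom.inl N (Multiplicative (ZMod 2)))
    (t := (1, Multiplicative.ofAdd 1)) (fun _ _ h => congrArg Prod.fst h)
    (Prod.ext (one_mul 1) hsq) (by simp) ?_ ?_).map MulEquiv.symm
  · rintro ⟨x, hx⟩
    have h : (1 : Multiplicative (ZMod 2)) = Multiplicative.ofAdd 1 := congrArg Prod.snd hx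
    exact absurd h (by decide)
  · rintro ⟨x, u⟩
    rcases multiplicative_zmodTwo_cases u with rfl | rfl
    · exact Or.inl ⟨x, rfl⟩
    · exact Or.inr ⟨x, Prod.ext (mul_one x).symm hsq.symm⟩

end InvolutionProduct

theorem mul_self_eq_one_of_center_eq_bot (hcenter : Subgroup.center N = ⊥) {f : N →* G}
    (hinj : Function.Injective f) (hθ : θ * θ = 1) {t : G} (hf : ∀ x, t * f x = f (θ x) * t)
    (ht : t * t ∈ f.range) : t * t = 1 := by
  obtain ⟨c, hc⟩ := ht
  have hc_center : c ∈ Subgroup.center N := by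
    refine Subgroup.mem_center_iff.mpr fun x => hinj ?_
    have hθx : θ (θ x) = x := DFunLike.congr_fun hθ x
    calc f (x * c) = f (θ (θ x)) * t * t := by rw [map_mul, hc, hθx, mul_assoc]
      _ = t * (f (θ x) * t) := by rw [← hf, mul_assoc]
      _ = f (c * x) := by rw [← hf, ← mul_assoc, map_mul, hc]
  rw [hcenter, Subgroup.mem_bot] at hc_center
  rw [← hc, hc_center, map_one]

theorem exists_mem_involutionProduct {H : Subgroup G} (hindex : H.index = 2)
    (hcenter : Subgroup.center N = ⊥) (e : H ≃* N) {S : Set (MulAut N)}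
    (hS : ∀ θ ∈ S, θ * θ = 1) (hcover : ∀ φ : MulAut N, ∃ γ, ∃ θ ∈ S, φ = MulAut.conj γ * θ) :
    ∃ θ ∈ S, ∃ hθ : θ * θ = 1, Nonempty (G ≃* InvolutionProduct hθ) := by
  have := Subgroup.normal_of_index_eq_two hindex
  obtain ⟨s, hs⟩ : ∃ s, s ∉ H := by
    by_contra! h
    simp [(Subgroup.eq_top_iff' H).mpr h] at hindex
  obtain ⟨γ, θ, hθS, hφ⟩ := hcover (MulAut.congr e (MulAut.conjNormal s))
  have hθ := hS θ hθS
  let f : N →* G := H.subtype.comp e.symm.toMonoidHom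
  have hf_mem : ∀ d, d ∈ f.range ↔ d ∈ H := by
    intro d
    exact ⟨by rintro ⟨x, rfl⟩; exact (e.symm x).2, fun h => ⟨e ⟨d, h⟩, by simp [f]⟩⟩
  have hinj : Function.Injective f := H.subtype_injective.comp e.symm.injective
  let t := f γ⁻¹ * s
  have htH : t ∉ H := by
    rwa [H.mul_mem_cancel_left ((hf_mem _).mp ⟨_, rfl⟩)]
  have htf : ∀ x, t * f x = f (θ x) * t := by
    intro x
    have hsx : s * f x * s⁻¹ = f (γ * θ x * γ⁻¹) := by
      have h := congrArg (fun y => (e.symm y : G)) (DFunLike.congr_fun hφ x)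
      simpa [f, MulAut.congr] using h
    rw [mul_inv_eq_iff_eq_mul] at hsx
    simp only [t, mul_assoc, hsx]
    simp [← mul_assoc]
  have htt := mul_self_eq_one_of_center_eq_bot hcenter hinj hθ htf
    ((hf_mem _).mpr (Subgroup.mul_self_mem_of_index_two hindex t))
  exact ⟨θ, hθS, hθ, InvolutionProduct.nonempty_mulEquiv hinj htt htf
    (mt (hf_mem t).mp htH) fun d => by
      rw [hf_mem, hf_mem, Subgroup.mul_mem_iff_of_index_two hindex]
      tauto⟩

end InvolutionProduct

section SimplyLaced

variable {B W V : Type*} [Group W] [AddCommGroup V] {M : CoxeterMatrix B}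
  {cs : CoxeterSystem M W}

theorem simple_mul_simple_comm {i j : B} (h : M i j = 2) :
    cs.simple i * cs.simple j = cs.simple j * cs.simple i := by
  have hpow := cs.simple_mul_simple_pow i j
  rw [h, sq] at hpow
  simpa using eq_inv_of_mul_eq_one_left hpow

theorem simple_braid {i j : B} (h : M i j = 3) :
    cs.simple i * cs.simple j * cs.simple i = cs.simple j * cs.simple i * cs.simple j := by
  have hpow := cs.simple_mul_simple_pow i j
  rw [h] at hpow
  have hprod : (cs.simple i * cs.simple j * cs.simple i) *
      (cs.simple j * cs.simple i * cs.simple j) = 1 := by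
    rw [← hpow]
    simp only [pow_succ, pow_zero, one_mul, mul_assoc]
  simpa [mul_assoc] using eq_inv_of_mul_eq_one_left hprod

theorem length_mul_simple_lt_of_comm {w : W} {i j : B} (h : M i j = 2)
    (hi : cs.length w < cs.length (w * cs.simple i))
    (hij : cs.length (w * cs.simple i) < cs.length (w * cs.simple i * cs.simple j)) :
    cs.length w < cs.length (w * cs.simple j) := by
  have hswap : w * cs.simple i * cs.simple j = w * cs.simple j * cs.simple i := by
    rw [mul_assoc, simple_mul_simple_comm h, mul_assoc]
  have h1 := cs.length_mul_simple (w * cs.simple j) i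
  rw [← hswap] at h1
  have h2 := cs.length_mul_simple w j
  omega

theorem length_mul_simple_lt_of_braid {w : W} {i j : B} (h : M i j = 3)
    (hi : cs.length w < cs.length (w * cs.simple i))
    (hij : cs.length (w * cs.simple i) < cs.length (w * cs.simple i * cs.simple j))
    (hiji : cs.length (w * cs.simple i * cs.simple j) <
      cs.length (w * cs.simple i * cs.simple j * cs.simple i)) :
    cs.length w < cs.length (w * cs.simple j) := by
  have hbraid : w * cs.simple i * cs.simple j * cs.simple i =
      w * cs.simple j * cs.simple i * cs.simple j := by
    simpa only [mul_assoc] using congrArg (w * ·) (simple_braid (cs := cs) h)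
  have h1 := cs.length_mul_simple (w * cs.simple j * cs.simple i) j
  rw [← hbraid] at h1
  have h2 := cs.length_mul_simple (w * cs.simple j) i
  have h3 := cs.length_mul_simple w j
  omega

/-- Vectors on which the simple reflections of a simply-laced Coxeter system act as they do on the
simple roots of its geometric representation. Linear independence is not part of the notion: the
faithfulness criterion below asks for a height functional instead. -/
structure IsSimpleRootFamily (cs : CoxeterSystem M W) (ρ : W →* AddMonoid.End V) (α : B → V) :
    Prop where
  simplyLaced : ∀ i j, i ≠ j → M i j = 2 ∨ M i j = 3
  apply_self : ∀ i, ρ (cs.simple i) (α i) = -α i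
  apply_of_eq_two : ∀ i j, M i j = 2 → ρ (cs.simple i) (α j) = α j
  apply_of_eq_three : ∀ i j, M i j = 3 → ρ (cs.simple i) (α j) = α i + α j

namespace IsSimpleRootFamily

variable {ρ : W →* AddMonoid.End V} {α : B → V} {Γ : Type*} [AddCommGroup Γ] [LinearOrder Γ]
  [IsOrderedAddMonoid Γ] {L : V →+ Γ}

theorem mul_simple_apply_self (h : IsSimpleRootFamily cs ρ α) (w : W) (i : B) :
    ρ (w * cs.simple i) (α i) = -ρ w (α i) := by
  rw [map_mul, AddMonoid.End.coe_mul, Function.comp_apply, h.apply_self, map_neg]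

theorem mul_simple_apply_of_eq_two (h : IsSimpleRootFamily cs ρ α) (w : W) {i j : B}
    (hij : M i j = 2) : ρ (w * cs.simple i) (α j) = ρ w (α j) := by
  rw [map_mul, AddMonoid.End.coe_mul, Function.comp_apply, h.apply_of_eq_two i j hij]

theorem mul_simple_apply_of_eq_three (h : IsSimpleRootFamily cs ρ α) (w : W) {i j : B}
    (hij : M i j = 3) : ρ (w * cs.simple i) (α j) = ρ w (α i) + ρ w (α j) := by
  rw [map_mul, AddMonoid.End.coe_mul, Function.comp_apply, h.apply_of_eq_three i j hij, map_add]

theorem height_nonneg_of_length_lt (h : IsSimpleRootFamily cs ρ α) (hL : ∀ i, 0 < L (α i)) (w : W)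
    (i : B) (hw : cs.length w < cs.length (w * cs.simple i)) : 0 ≤ L (ρ w (α i)) := by
  induction hn : cs.length w using Nat.strong_induction_on generalizing w i with
  | _ n ih =>
  subst hn
  by_cases hw1 : w = 1
  · simpa [hw1] using (hL i).le
  obtain ⟨j, hj⟩ := cs.exists_rightDescent_of_ne_one hw1
  rw [cs.isRightDescent_iff] at hj
  obtain ⟨v, rfl⟩ : ∃ v, w = v * cs.simple j := ⟨w * cs.simple j, by simp⟩
  rw [cs.simple_mul_simple_cancel_right] at hj
  have hji : j ≠ i := by
    rintro rfl
    rw [cs.simple_mul_simple_cancel_right] at hw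
    omega
  obtain hm | hm := h.simplyLaced j i hji
  · rw [h.mul_simple_apply_of_eq_two v hm]
    exact ih _ (by omega) v i (length_mul_simple_lt_of_comm hm (by omega) hw) rfl
  rw [h.mul_simple_apply_of_eq_three v hm]
  obtain hvi | hvi := cs.length_mul_simple v i
  · rw [map_add]
    exact add_nonneg (ih _ (by omega) v j (by omega) rfl) (ih _ (by omega) v i (by omega) rfl)
  obtain ⟨u, rfl⟩ : ∃ u, v = u * cs.simple i := ⟨v * cs.simple i, by simp⟩
  rw [cs.simple_mul_simple_cancel_right] at hvi
  have hm' : M i j = 3 := M.symmetric j i ▸ hm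
  rw [h.mul_simple_apply_of_eq_three u hm', h.mul_simple_apply_self, add_neg_cancel_comm]
  exact ih _ (by omega) u j (length_mul_simple_lt_of_braid hm' (by omega) (by omega) hw) rfl

theorem injective_of_height_pos (h : IsSimpleRootFamily cs ρ α) (hL : ∀ i, 0 < L (α i)) :
    Function.Injective ρ := by
  rw [injective_iff_map_eq_one]
  intro w hw
  by_contra hne
  obtain ⟨i, hi⟩ := cs.exists_rightDescent_of_ne_one hne
  rw [cs.isRightDescent_iff] at hi
  have hnonneg := h.height_nonneg_of_length_lt hL (w * cs.simple i) i
    (by rw [cs.simple_mul_simple_cancel_right]; omega)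
  rw [h.mul_simple_apply_self, hw, AddMonoid.End.coe_one, id, map_neg, neg_nonneg] at hnonneg
  exact (hL i).not_ge hnonneg

end IsSimpleRootFamily

end SimplyLaced

/-- A model of the Eisenstein integers with decidable arithmetic: pairs `x + yω` with
`ω² = -1 - ω`. -/
abbrev ZOmega : Type := QuadraticAlgebra ℤ (-1) (-1)

namespace ZOmega

/-- The primitive cube root of unity of `ZOmega`. -/
def ω : ZOmega := ⟨0, 1⟩

theorem omega_sq : ω ^ 2 = -1 - ω := by decide

theorem omega_cubed : ω ^ 3 = 1 := by decide

theorem star_omega : star ω = ω ^ 2 := by decide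

theorem norm_eq (z : ZOmega) :
    QuadraticAlgebra.norm z = z.re ^ 2 - z.re * z.im + z.im ^ 2 := by
  rw [QuadraticAlgebra.norm_def]
  ring

theorem norm_nonneg (z : ZOmega) : 0 ≤ QuadraticAlgebra.norm z := by
  rw [norm_eq]
  nlinarith [sq_nonneg (2 * z.re - z.im), sq_nonneg z.im]

theorem norm_eq_zero {z : ZOmega} : QuadraticAlgebra.norm z = 0 ↔ z = 0 := by
  refine ⟨fun h => ?_, fun h => by rw [h, QuadraticAlgebra.norm_zero]⟩
  rw [norm_eq] at h
  have him : z.im = 0 := by nlinarith [sq_nonneg (2 * z.re - z.im), sq_nonneg z.im]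
  have hre : z.re = 0 := by nlinarith [sq_nonneg (2 * z.im - z.re), sq_nonneg z.re]
  ext <;> simp [him, hre]

theorem natAbs_norm_lt_iff {a b : ZOmega} :
    (QuadraticAlgebra.norm a).natAbs < (QuadraticAlgebra.norm b).natAbs ↔
      QuadraticAlgebra.norm a < QuadraticAlgebra.norm b := by
  have := norm_nonneg a
  have := norm_nonneg b
  omega

/-- The nearest integer to `m / n`, for positive `n`. -/
def roundDiv (m n : ℤ) : ℤ := (2 * m + n) / (2 * n)

theorem four_mul_sub_roundDiv_mul_sq_le (m : ℤ) {n : ℤ} (hn : 0 < n) :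
    4 * (m - roundDiv m n * n) ^ 2 ≤ n ^ 2 := by
  have hr_nonneg := Int.emod_nonneg (2 * m + n) (show 2 * n ≠ 0 by omega)
  have hr_lt := Int.emod_lt_of_pos (2 * m + n) (show 0 < 2 * n by omega)
  have hdiv := Int.mul_ediv_add_emod (2 * m + n) (2 * n)
  rw [roundDiv]
  have habs : |2 * (m - (2 * m + n) / (2 * n) * n)| ≤ n := by
    rw [abs_le]
    constructor <;> linarith
  nlinarith [sq_le_sq' (neg_le_of_abs_le habs) (le_of_abs_le habs)]

/-- The quotient `a / c` rounded coordinatewise to an element of `ZOmega`. -/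
def quotient (a c : ZOmega) : ZOmega :=
  ⟨roundDiv (a * star c).re (QuadraticAlgebra.norm c),
    roundDiv (a * star c).im (QuadraticAlgebra.norm c)⟩

theorem norm_sub_quotient_mul_lt (a : ZOmega) {c : ZOmega} (hc : c ≠ 0) :
    QuadraticAlgebra.norm (a - c * quotient a c) < QuadraticAlgebra.norm c := by
  have hn : 0 < QuadraticAlgebra.norm c :=
    (norm_nonneg c).lt_of_ne' (mt norm_eq_zero.mp hc)
  have hre := four_mul_sub_roundDiv_mul_sq_le (a * star c).re hn
  have him := four_mul_sub_roundDiv_mul_sq_le (a * star c).im hn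
  have hmul : (a - c * quotient a c) * star c =
      ⟨(a * star c).re - (quotient a c).re * QuadraticAlgebra.norm c,
        (a * star c).im - (quotient a c).im * QuadraticAlgebra.norm c⟩ := by
    rw [sub_mul, mul_right_comm, ← QuadraticAlgebra.algebraMap_norm_eq_mul_star]
    ext <;> simp [mul_comm]
  have hnorm := (congrArg QuadraticAlgebra.norm hmul).trans (norm_eq _)
  rw [map_mul, QuadraticAlgebra.norm_star] at hnorm
  simp only [quotient] at hre him hnorm ⊢
  set x := (a * star c).re - roundDiv (a * star c).re (QuadraticAlgebra.norm c) * _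
  set y := (a * star c).im - roundDiv (a * star c).im (QuadraticAlgebra.norm c) * _
  nlinarith [sq_nonneg (x + y)]

instance : EuclideanDomain ZOmega where
  quotient := quotient
  remainder a c := a - c * quotient a c
  quotient_zero a := by
    ext <;> simp [quotient, roundDiv]
  quotient_mul_add_remainder_eq a c := add_sub_cancel _ _
  r := InvImage (· < ·) fun z => (QuadraticAlgebra.norm z).natAbs
  r_wellFounded := InvImage.wf _ wellFounded_lt
  remainder_lt a _ hc := natAbs_norm_lt_iff.mpr (norm_sub_quotient_mul_lt a hc)
  mul_left_not_lt a b hb := by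
    have hpos : 0 < QuadraticAlgebra.norm b :=
      (norm_nonneg b).lt_of_ne' (mt norm_eq_zero.mp hb)
    refine mt natAbs_norm_lt_iff.mp (not_lt.mpr ?_)
    rw [map_mul]
    exact le_mul_of_one_le_right (norm_nonneg a) hpos

theorem pow_six_eq_one_of_isUnit {u : ZOmega} (hu : IsUnit u) : u ^ 6 = 1 := by
  have hnorm : QuadraticAlgebra.norm u = 1 :=
    (Int.isUnit_iff.mp (QuadraticAlgebra.isUnit_iff_norm_isUnit.mp hu)).resolve_right
      (by have := norm_nonneg u; omega)
  rw [norm_eq] at hnorm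
  obtain ⟨x, y⟩ := u
  have hx : -1 ≤ x ∧ x ≤ 1 := by constructor <;> nlinarith [sq_nonneg (2 * y - x)]
  have hy : -1 ≤ y ∧ y ≤ 1 := by constructor <;> nlinarith [sq_nonneg (2 * x - y)]
  obtain ⟨⟨_, _⟩, _, _⟩ := And.intro hx hy
  clear hu hx hy
  interval_cases x <;> interval_cases y <;> revert hnorm <;> decide

theorem exists_sq_eq_or_neg_sq_eq {u : ZOmega} (hu : IsUnit u) :
    ∃ s : ZOmega, IsUnit s ∧ (u = s ^ 2 ∨ u = -s ^ 2) := by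
  have h6 := pow_six_eq_one_of_isUnit hu
  refine ⟨u ^ 2, hu.pow 2, ?_⟩
  have h3 : u ^ 3 = 1 ∨ u ^ 3 = -1 := mul_self_eq_one_iff.mp (by rw [← h6]; ring)
  refine h3.imp (fun h => ?_) fun h => ?_
  · linear_combination -u * h
  · linear_combination u * h

theorem sq_ne_neg_one (u : ZOmega) : u ^ 2 ≠ -1 := by
  intro h
  have hu : IsUnit u := IsUnit.of_mul_eq_one (-u) (by linear_combination -h)
  have h6 := pow_six_eq_one_of_isUnit hu
  rw [pow_mul u 2 3, h] at h6
  exact absurd h6 (by decide)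

theorem eq_omega_or_eq_star_omega {q : ZOmega} (h : q ^ 2 + q + 1 = 0) :
    q = ω ∨ q = star ω := by
  have hmul : (q - ω) * (q - ω ^ 2) = 0 := by
    linear_combination h - q * omega_sq + omega_cubed
  rw [star_omega, ← sub_eq_zero, ← sub_eq_zero (a := q)]
  exact mul_eq_zero.mp hmul

section RingOfIntegers

variable {K : Type*} [Field K] [NumberField K] [IsCyclotomicExtension {3} ℚ K]

theorem nonempty_ringEquiv_ringOfIntegers :
    Nonempty (NumberField.RingOfIntegers K ≃+* ZOmega) := by
  have hζ := IsCyclotomicExtension.zeta_spec 3 ℚ K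
  have hz : hζ.toInteger * hζ.toInteger = (-1 : ℤ) • 1 + (-1 : ℤ) • hζ.toInteger := by
    have h := hζ.toInteger_isPrimitiveRoot.geom_sum_eq_zero (by norm_num)
    simp only [Finset.sum_range_succ, Finset.sum_range_zero, pow_zero, pow_one] at h
    simp only [neg_smul, one_smul]
    linear_combination h
  let f := QuadraticAlgebra.lift (R := ℤ) (a := -1) (b := -1) ⟨hζ.toInteger, hz⟩
  let b := hζ.integralPowerBasis.basis.reindex (finCongr
    ((hζ.integralPowerBasis_dim).trans (by decide : Nat.totient 3 = 2)))
  have hf : ∀ x : ZOmega, f x = x.re • b 0 + x.im • b 1 := by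
    intro x
    simp [f, b, QuadraticAlgebra.lift, Algebra.smul_def]
  refine ⟨(RingEquiv.ofBijective f ⟨?_, fun y => ⟨⟨b.repr y 0, b.repr y 1⟩, ?_⟩⟩).symm⟩
  · rw [injective_iff_map_eq_zero]
    intro x hx
    have hcoeff := Fintype.linearIndependent_iff.mp b.linearIndependent ![x.re, x.im]
      (by simpa [Fin.sum_univ_two] using (hf x).symm.trans hx)
    exact QuadraticAlgebra.ext (hcoeff 0) (hcoeff 1)
  · rw [hf]
    simpa only [Fin.sum_univ_two] using b.sum_repr y

end RingOfIntegers

end ZOmega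

section SpecialLinear

variable {R : Type*} [CommRing R]

/-- The `2 × 2` matrix with rows `(a, b)`, `(c, d)`, as an element of `SL(2, R)`. -/
def slMk (a b c d : R) (h : a * d - b * c = 1) : SL(2, R) :=
  ⟨!![a, b; c, d], by rw [Matrix.det_fin_two_of, h]⟩

@[simp]
theorem coe_slMk (a b c d : R) (h : a * d - b * c = 1) :
    (slMk a b c d h : Matrix (Fin 2) (Fin 2) R) = !![a, b; c, d] := rfl

theorem sl_ext {A B : SL(2, R)} (h00 : A 0 0 = B 0 0) (h01 : A 0 1 = B 0 1)
    (h10 : A 1 0 = B 1 0) (h11 : A 1 1 = B 1 1) : A = B :=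
  Matrix.SpecialLinearGroup.ext _ _ <| by
    simp only [Fin.forall_fin_two]
    exact ⟨⟨h00, h01⟩, h10, h11⟩

theorem sl_mul_apply (A B : SL(2, R)) (i j : Fin 2) :
    (A * B) i j = A i 0 * B 0 j + A i 1 * B 1 j := by
  rw [Matrix.SpecialLinearGroup.coe_mul, Matrix.mul_apply, Fin.sum_univ_two]

theorem sl_det (A : SL(2, R)) : A 0 0 * A 1 1 - A 0 1 * A 1 0 = 1 := by
  rw [← Matrix.det_fin_two, A.det_coe]

theorem sl_inv_eq (A : SL(2, R)) :
    A⁻¹ = slMk (A 1 1) (-A 0 1) (-A 1 0) (A 0 0) (by linear_combination sl_det A) :=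
  Subtype.ext <| by rw [Matrix.SpecialLinearGroup.coe_inv, Matrix.adjugate_fin_two, coe_slMk]

/-- The inversion `z ↦ -1/z`. -/
def slS : SL(2, R) := slMk 0 1 (-1) 0 (by ring)

/-- The translation `z ↦ z + q`. -/
def slT (q : R) : SL(2, R) := slMk 1 q 0 1 (by ring)

theorem slT_add (p q : R) : slT (p + q) = slT p * slT q := by
  apply sl_ext <;> simp [slT, sl_mul_apply, add_comm]

theorem slT_zero : slT (0 : R) = 1 := by
  apply sl_ext <;> simp [slT]

theorem slT_neg (q : R) : slT (-q) = (slT q)⁻¹ := by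
  rw [eq_inv_iff_mul_eq_one, ← slT_add, neg_add_cancel, slT_zero]

/-- The additive subgroup of translation lengths of a subgroup of `SL(2, R)`. -/
def translations (K : Subgroup SL(2, R)) : AddSubgroup R where
  carrier := {q | slT q ∈ K}
  add_mem' hp hq := by
    rw [Set.mem_ofPred_eq, slT_add]
    exact K.mul_mem hp hq
  zero_mem' := by
    rw [Set.mem_ofPred_eq, slT_zero]
    exact K.one_mem
  neg_mem' hq := by
    rw [Set.mem_ofPred_eq, slT_neg]
    exact K.inv_mem hq

theorem mem_translations {K : Subgroup SL(2, R)} {q : R} : q ∈ translations K ↔ slT q ∈ K :=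
  Iff.rfl

theorem slMk_upper_mem {K : Subgroup SL(2, R)} (hS : slS ∈ K) (hT : ∀ q, slT q ∈ K) {u v : R}
    (b : R) (h : u * v - b * 0 = 1) : slMk u b 0 v h ∈ K := by
  have huv : u * v = 1 := by linear_combination h
  have hlower : ∀ x : R, slMk 1 0 x 1 (by ring) ∈ K := by
    intro x
    convert K.mul_mem (K.mul_mem hS (hT (-x))) (K.inv_mem hS) using 1
    apply sl_ext <;> simp [slS, slT, sl_mul_apply, sl_inv_eq]
  convert K.mul_mem (K.mul_mem (K.mul_mem (K.mul_mem (hT u) (hlower (-v))) (hT u)) (K.inv_mem hS))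
    (hT (v * b)) using 1
  apply sl_ext <;>
    simp only [slS, slT, sl_mul_apply, sl_inv_eq, coe_slMk, Matrix.of_apply, Matrix.cons_val',
      Matrix.cons_val_zero, Matrix.cons_val_one, Matrix.cons_val_fin_one]
  · linear_combination u * huv
  · linear_combination (u * v * b - b - 1) * huv
  · linear_combination huv
  · linear_combination v * b * huv

end SpecialLinear

section Euclidean

variable {R : Type*} [EuclideanDomain R]

/- The Euclidean algorithm swaps the two entries at each step, which costs a sign because `slS` has
determinant one; hence the sign `e` in the induction. -/
theorem exists_mem_mul_add_mul_eq_zero_of_sign {K : Subgroup SL(2, R)} (hS : slS ∈ K)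
    (hT : ∀ q, slT q ∈ K) (c a : R) :
    ∀ e : R, e * e = 1 → ∃ M ∈ K, M 1 0 * a + M 1 1 * (e * c) = 0 := by
  induction c, a using EuclideanDomain.GCD.induction with
  | H0 a => exact fun e _ => ⟨1, K.one_mem, by simp⟩
  | H1 c a _ ih =>
    intro e he
    obtain ⟨M, hM, h⟩ := ih (-e) (by linear_combination he)
    refine ⟨M * slS * slT (-(e * (a / c))), K.mul_mem (K.mul_mem hM hS) (hT _), ?_⟩
    simp only [slS, slT, sl_mul_apply, coe_slMk, Matrix.of_apply, Matrix.cons_val',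
      Matrix.cons_val_zero, Matrix.cons_val_one, Matrix.cons_val_fin_one]
    have hdiv := EuclideanDomain.div_add_mod a c
    linear_combination e * h + M 1 1 * (a % c) * he + M 1 1 * hdiv + M 1 1 * c * (a / c) * he

theorem exists_mem_mul_add_mul_eq_zero {K : Subgroup SL(2, R)} (hS : slS ∈ K)
    (hT : ∀ q, slT q ∈ K) (a c : R) : ∃ M ∈ K, M 1 0 * a + M 1 1 * c = 0 := by
  simpa using exists_mem_mul_add_mul_eq_zero_of_sign hS hT c a 1 (one_mul 1)

theorem eq_top_of_slS_mem_of_slT_mem {K : Subgroup SL(2, R)} (hS : slS ∈ K)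
    (hT : ∀ q, slT q ∈ K) : K = ⊤ := by
  refine (Subgroup.eq_top_iff' K).mpr fun A => ?_
  obtain ⟨M, hM, h⟩ := exists_mem_mul_add_mul_eq_zero hS hT (A 0 0) (A 1 0)
  rw [← K.mul_mem_cancel_left hM]
  rw [← sl_mul_apply] at h
  have hdet := sl_det (M * A)
  rw [h] at hdet
  convert slMk_upper_mem hS hT ((M * A) 0 1) hdet using 1
  apply sl_ext <;> simp [h]

end Euclidean

section Generation

open ZOmega

/-- The diagonal matrix with entries `ω` and `ω⁻¹`. -/
def slD : SL(2, ZOmega) := slMk ω 0 0 (ω ^ 2) (by decide)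

theorem slT_mem_of_slD_mem {K : Subgroup SL(2, ZOmega)} (hT : slT 1 ∈ K) (hD : slD ∈ K)
    (q : ZOmega) : slT q ∈ K := by
  have hconj : slT (ω ^ 2) = slD * slT 1 * slD⁻¹ := by decide
  have h1 : 1 ∈ translations K := hT
  have h2 : ω ^ 2 ∈ translations K := by
    rw [mem_translations, hconj]
    exact K.mul_mem (K.mul_mem hD hT) (K.inv_mem hD)
  have hq : q = (q.re - q.im) • (1 : ZOmega) - q.im • ω ^ 2 := by
    rw [omega_sq]
    ext <;> simp [ω, QuadraticAlgebra.re_one, QuadraticAlgebra.im_one]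
  rw [← mem_translations, hq]
  exact sub_mem (zsmul_mem h1 _) (zsmul_mem h2 _)

theorem eq_top_of_generators_mem {K : Subgroup SL(2, ZOmega)} (hS : slS ∈ K) (hT : slT 1 ∈ K)
    (hD : slD ∈ K) : K = ⊤ :=
  eq_top_of_slS_mem_of_slT_mem hS (slT_mem_of_slD_mem hT hD)

end Generation

section CenterQuotient

variable {G H : Type*} [Group G] [Group H]

theorem map_center_mulEquiv (e : G ≃* H) :
    (Subgroup.center G).map (e : G →* H) = Subgroup.center H := by
  ext y
  obtain ⟨x, rfl⟩ := e.surjective y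
  have hmap := Subgroup.mem_map_equiv (f := e) (K := Subgroup.center G) (x := e x)
  rw [e.symm_apply_apply] at hmap
  exact hmap.trans (MulEquivClass.apply_mem_center_iff e).symm

/-- The isomorphism of central quotients induced by an isomorphism of groups; for automorphisms of
`SL(2, R)` it yields the induced automorphisms of `PSL(2, R)`. -/
def centerQuotientCongr (e : G ≃* H) : G ⧸ Subgroup.center G ≃* H ⧸ Subgroup.center H :=
  QuotientGroup.congr _ _ e (map_center_mulEquiv e)

theorem centerQuotientCongr_one : centerQuotientCongr (1 : MulAut G) = (1 : MulAut _) :=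
  MulEquiv.ext fun x => QuotientGroup.induction_on x fun _ => rfl

theorem centerQuotientCongr_mul (e f : MulAut G) :
    centerQuotientCongr (e * f) = (centerQuotientCongr e * centerQuotientCongr f : MulAut _) :=
  MulEquiv.ext fun x => QuotientGroup.induction_on x fun _ => rfl

end CenterQuotient

section ProjectiveSpecialLinear

variable {R : Type*} [CommRing R]

/-- The projection `SL(2, R) → PSL(2, R)`. -/
def pslMk : SL(2, R) →* PSL(2, R) := QuotientGroup.mk' _

theorem pslMk_surjective : Function.Surjective (pslMk : SL(2, R) →* PSL(2, R)) :=
  QuotientGroup.mk'_surjective _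

theorem centerQuotientCongr_pslMk (θ : MulAut SL(2, R)) (A : SL(2, R)) :
    centerQuotientCongr θ (pslMk A) = pslMk (θ A) := rfl

/-- The trace of an element of `SL(2, R)`. -/
abbrev slTrace (A : SL(2, R)) : R := Matrix.trace (A : Matrix (Fin 2) (Fin 2) R)

theorem slTrace_eq (A : SL(2, R)) : slTrace A = A 0 0 + A 1 1 := Matrix.trace_fin_two _

theorem slTrace_neg (A : SL(2, R)) : slTrace (-A) = -slTrace A := by
  rw [slTrace, Matrix.SpecialLinearGroup.coe_neg, Matrix.trace_neg]

theorem slTrace_conj (M A : SL(2, R)) : slTrace (M * A * M⁻¹) = slTrace A := by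
  rw [slTrace, Matrix.SpecialLinearGroup.coe_mul, Matrix.trace_mul_comm,
    ← Matrix.SpecialLinearGroup.coe_mul, inv_mul_cancel_left]

theorem slTrace_mul_add_slTrace_mul_inv (A B : SL(2, R)) :
    slTrace (A * B) + slTrace (A * B⁻¹) = slTrace A * slTrace B := by
  simp only [slTrace_eq, sl_mul_apply, sl_inv_eq, coe_slMk, Matrix.of_apply,
    Matrix.cons_val_zero, Matrix.cons_val_one, Matrix.cons_val_fin_one]
  ring

theorem coe_mul_self (A : SL(2, R)) :
    (A * A : Matrix (Fin 2) (Fin 2) R) = slTrace A • (A : Matrix (Fin 2) (Fin 2) R) - 1 := by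
  have hdet := sl_det A
  ext i j
  fin_cases i <;> fin_cases j <;>
    simp only [slTrace_eq, Fin.zero_eta, Fin.mk_one, Matrix.one_fin_two, Matrix.sub_apply,
      Matrix.smul_apply, smul_eq_mul, Matrix.mul_apply, Fin.sum_univ_two, Matrix.of_apply,
      Matrix.cons_val', Matrix.cons_val_zero, Matrix.cons_val_one, Matrix.cons_val_fin_one]
  · linear_combination -hdet
  · ring
  · ring
  · linear_combination -hdet

theorem coe_cubed (A : SL(2, R)) : ((A ^ 3 : SL(2, R)) : Matrix (Fin 2) (Fin 2) R) =
    (slTrace A ^ 2 - 1) • (A : Matrix (Fin 2) (Fin 2) R) - slTrace A • 1 := by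
  rw [pow_succ, sq, Matrix.SpecialLinearGroup.coe_mul, Matrix.SpecialLinearGroup.coe_mul,
    coe_mul_self, sub_mul, smul_mul_assoc, coe_mul_self, one_mul]
  module

variable [IsDomain R]

theorem pslMk_eq_one_iff {A : SL(2, R)} : pslMk A = 1 ↔ A = 1 ∨ A = -1 := by
  rw [pslMk, QuotientGroup.mk'_apply, QuotientGroup.eq_one_iff,
    Matrix.SpecialLinearGroup.mem_center_iff]
  constructor
  · rintro ⟨r, hr, h⟩
    rw [Fintype.card_fin, sq_eq_one_iff] at hr
    rcases hr with rfl | rfl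
    · exact Or.inl (Subtype.ext (by rw [← h, map_one, Matrix.SpecialLinearGroup.coe_one]))
    · exact Or.inr (Subtype.ext (by rw [← h, map_neg, map_one]; rfl))
  · rintro (rfl | rfl)
    · exact ⟨1, one_pow _, by rw [map_one, Matrix.SpecialLinearGroup.coe_one]⟩
    · exact ⟨-1, by simp, by rw [map_neg, map_one]; rfl⟩

theorem pslMk_eq_iff {A B : SL(2, R)} : pslMk A = pslMk B ↔ A = B ∨ A = -B := by
  rw [← mul_inv_eq_one, ← map_inv, ← map_mul, pslMk_eq_one_iff, mul_inv_eq_one,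
    mul_inv_eq_iff_eq_mul, neg_one_mul]

theorem pslMk_neg (A : SL(2, R)) : pslMk (-A) = pslMk A :=
  pslMk_eq_iff.mpr (Or.inr rfl)

theorem pslMk_eq_one_of_smul_eq {A : SL(2, R)} {t s : R} (ht : t ≠ 0)
    (h : t • A.1 = s • (1 : Matrix (Fin 2) (Fin 2) R)) : pslMk A = 1 := by
  have hentry : ∀ i j, t * A i j = s * (1 : Matrix (Fin 2) (Fin 2) R) i j := fun i j =>
    congrFun (congrFun h i) j
  have h01 : A 0 1 = 0 := by simpa [ht] using hentry 0 1
  have h10 : A 1 0 = 0 := by simpa [ht] using hentry 1 0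
  have h11 : A 1 1 = A 0 0 := mul_left_cancel₀ ht (by simp [hentry])
  have hsq : A 0 0 * A 0 0 = 1 := by linear_combination sl_det A - A 0 0 * h11 + A 1 0 * h01
  rw [pslMk_eq_one_iff]
  refine (mul_self_eq_one_iff.mp hsq).imp (fun h00 => ?_) (fun h00 => ?_) <;>
    apply sl_ext <;> simp [h00, h01, h10, h11]

theorem slTrace_eq_zero_of_sq_eq_one {A : SL(2, R)} (hA : pslMk A ≠ 1) (h : pslMk A ^ 2 = 1) :
    slTrace A = 0 := by
  by_contra ht
  have hsq := eq_add_of_sub_eq (coe_mul_self A).symm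
  rw [← map_pow, pslMk_eq_one_iff, sq] at h
  rcases h with h | h <;> rw [← Matrix.SpecialLinearGroup.coe_mul, h] at hsq
  · refine hA (pslMk_eq_one_of_smul_eq (s := 2) ht (hsq.trans ?_))
    rw [Matrix.SpecialLinearGroup.coe_one, one_add_one_eq_two, two_smul, one_add_one_eq_two]
  · refine hA (pslMk_eq_one_of_smul_eq (s := 0) ht (hsq.trans ?_))
    rw [Matrix.SpecialLinearGroup.coe_neg, Matrix.SpecialLinearGroup.coe_one, neg_add_cancel,
      zero_smul]

theorem sq_eq_one_of_slTrace_eq_zero {A : SL(2, R)} (h : slTrace A = 0) : pslMk A ^ 2 = 1 := by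
  rw [← map_pow, pslMk_eq_one_iff, sq]
  refine Or.inr (Subtype.ext ?_)
  rw [Matrix.SpecialLinearGroup.coe_mul, coe_mul_self, h, zero_smul, zero_sub]
  rfl

theorem slTrace_sq_eq_one_of_cubed_eq_one {A : SL(2, R)} (hA : pslMk A ≠ 1)
    (h : pslMk A ^ 3 = 1) : slTrace A ^ 2 = 1 := by
  by_contra ht
  have hcubed := eq_add_of_sub_eq (coe_cubed A).symm
  rw [← map_pow, pslMk_eq_one_iff] at h
  rcases h with h | h <;> rw [h] at hcubed
  · refine hA (pslMk_eq_one_of_smul_eq (s := 1 + slTrace A) (sub_ne_zero.mpr ht) (hcubed.trans ?_))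
    rw [Matrix.SpecialLinearGroup.coe_one, add_smul, one_smul]
  · refine hA (pslMk_eq_one_of_smul_eq (s := -1 + slTrace A) (sub_ne_zero.mpr ht) (hcubed.trans ?_))
    rw [Matrix.SpecialLinearGroup.coe_neg, Matrix.SpecialLinearGroup.coe_one, add_smul,
      neg_one_smul]

theorem exists_pslMk_eq_slTrace_eq_neg_one {x : PSL(2, R)} (hx : x ≠ 1) (h : x ^ 3 = 1) :
    ∃ A, pslMk A = x ∧ slTrace A = -1 := by
  obtain ⟨A, rfl⟩ := pslMk_surjective x
  rcases sq_eq_one_iff.mp (slTrace_sq_eq_one_of_cubed_eq_one hx h) with ht | ht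
  · exact ⟨-A, pslMk_neg A, by rw [slTrace_neg, ht]⟩
  · exact ⟨A, rfl, ht⟩

theorem slTrace_mul_eq_two {A B : SL(2, R)} (hA : slTrace A = -1) (hB : slTrace B = -1)
    (hinv : pslMk (A * B⁻¹) ≠ 1) (hcubed : pslMk (A * B⁻¹) ^ 3 = 1)
    (hsq : pslMk (A * B) ^ 2 ≠ 1) : slTrace (A * B) = 2 := by
  have hsum := slTrace_mul_add_slTrace_mul_inv A B
  rw [hA, hB] at hsum
  rcases sq_eq_one_iff.mp (slTrace_sq_eq_one_of_cubed_eq_one hinv hcubed) with h | h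
  · exact absurd (sq_eq_one_of_slTrace_eq_zero (by linear_combination hsum - h)) hsq
  · linear_combination hsum - h

theorem commute_of_pslMk_commute {A X : SL(2, R)} (hX : slTrace X = 2)
    (h : Commute (pslMk A) (pslMk X)) : Commute A X := by
  rw [Commute, SemiconjBy, ← map_mul, ← map_mul, pslMk_eq_iff] at h
  rcases h with h | h
  · exact h
  have htrace : (2 : R) = -2 := by
    have hconj : A * X * A⁻¹ = -X := by rw [h, neg_mul, mul_inv_cancel_right]
    rw [← hX, ← slTrace_neg, ← hconj, slTrace_conj]
  have htwo : (2 : R) = 0 := mul_self_eq_zero.mp (by linear_combination htrace)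
  have hneg : -(X * A) = X * A := Subtype.ext <| by
    ext i j
    rw [Matrix.SpecialLinearGroup.coe_neg, Matrix.neg_apply]
    linear_combination -(X * A) i j * htwo
  exact h.trans hneg

theorem center_psl_eq_bot : Subgroup.center PSL(2, R) = ⊥ := by
  refine (Subgroup.eq_bot_iff_forall _).mpr fun x hx => ?_
  obtain ⟨A, rfl⟩ := pslMk_surjective x
  have hcomm : ∀ X : SL(2, R), slTrace X = 2 → A * X = X * A := fun X hX =>
    commute_of_pslMk_commute hX (Subgroup.mem_center_iff.mp hx _).symm
  have hupper := hcomm (slT 1) ((slTrace_eq _).trans one_add_one_eq_two)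
  have hlower := hcomm (slMk 1 0 1 1 (by ring)) ((slTrace_eq _).trans one_add_one_eq_two)
  have entry : ∀ {X Y : SL(2, R)}, X = Y → ∀ i j, X i j = Y i j := fun h i j => by rw [h]
  have h10 : A 1 0 = 0 := by simpa [slT, sl_mul_apply] using entry hupper 0 0
  have h01 : A 0 1 = 0 := by simpa [sl_mul_apply] using entry hlower 0 0
  have h11 : A 0 0 = A 1 1 := by simpa [slT, sl_mul_apply, h01] using entry hupper 0 1
  refine pslMk_eq_one_of_smul_eq (t := 1) (s := A 0 0) one_ne_zero ?_
  rw [Matrix.eta_fin_two (A : Matrix (Fin 2) (Fin 2) R), Matrix.one_fin_two, h01, h10, ← h11]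
  simp

end ProjectiveSpecialLinear

section OuterAutomorphisms

variable {R : Type*} [CommRing R]

/-- Conjugation by the diagonal matrix with entries `1` and `-1`, which has determinant `-1`. -/
def diagConj : MulAut SL(2, R) where
  toFun A := slMk (A 0 0) (-A 0 1) (-A 1 0) (A 1 1) (by linear_combination sl_det A)
  invFun A := slMk (A 0 0) (-A 0 1) (-A 1 0) (A 1 1) (by linear_combination sl_det A)
  left_inv A := by apply sl_ext <;> simp
  right_inv A := by apply sl_ext <;> simp
  map_mul' A B := by
    apply sl_ext <;>
      simp only [sl_mul_apply, coe_slMk, Matrix.of_apply, Matrix.cons_val', Matrix.cons_val_zero,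
        Matrix.cons_val_one, Matrix.cons_val_fin_one] <;>
      ring

theorem diagConj_apply (A : SL(2, R)) : diagConj A =
    slMk (A 0 0) (-A 0 1) (-A 1 0) (A 1 1) (by linear_combination sl_det A) := rfl

/-- Entrywise conjugation. -/
def starAut [StarRing R] : MulAut SL(2, R) :=
  MonoidHom.toMulEquiv (Matrix.SpecialLinearGroup.map (starRingEnd R))
    (Matrix.SpecialLinearGroup.map (starRingEnd R))
    (MonoidHom.ext fun A => by apply sl_ext <;> simp)
    (MonoidHom.ext fun A => by apply sl_ext <;> simp)

theorem starAut_apply [StarRing R] (A : SL(2, R)) (i j : Fin 2) :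
    starAut A i j = star (A i j) := rfl

theorem diagConj_mul_self : (diagConj * diagConj : MulAut SL(2, R)) = 1 :=
  MulEquiv.ext fun A => by apply sl_ext <;> simp [diagConj_apply]

theorem starAut_mul_self [StarRing R] : (starAut * starAut : MulAut SL(2, R)) = 1 :=
  MulEquiv.ext fun A => by apply sl_ext <;> simp [starAut_apply]

theorem diagConj_mul_starAut [StarRing R] :
    (diagConj * starAut : MulAut SL(2, R)) = starAut * diagConj :=
  MulEquiv.ext fun A => by apply sl_ext <;> simp [diagConj_apply, starAut_apply]

/-- Representatives of the four classes of automorphisms of `SL(2, R)` generated by `diagConj` and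
`starAut`. -/
def outerReps (R : Type*) [CommRing R] [StarRing R] : Set (MulAut SL(2, R)) :=
  {1, diagConj, starAut, starAut * diagConj}

theorem mul_self_of_mem_outerReps [StarRing R] {θ : MulAut SL(2, R)} (hθ : θ ∈ outerReps R) :
    θ * θ = 1 := by
  rcases hθ with rfl | rfl | rfl | rfl
  · exact one_mul 1
  · exact diagConj_mul_self
  · exact starAut_mul_self
  · rw [mul_assoc, ← mul_assoc diagConj, diagConj_mul_starAut, mul_assoc, diagConj_mul_self,
      mul_one, starAut_mul_self]

theorem diagConj_mul_mem_outerReps [StarRing R] {θ : MulAut SL(2, R)}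
    (hθ : θ = 1 ∨ θ = starAut) : diagConj * θ ∈ outerReps R := by
  rcases hθ with rfl | rfl
  · exact Or.inr (Or.inl (mul_one _))
  · exact Or.inr (Or.inr (Or.inr diagConj_mul_starAut))

theorem centerQuotientCongr_mul_self [StarRing R] {θ : MulAut SL(2, R)} (hθ : θ ∈ outerReps R) :
    (centerQuotientCongr θ : MulAut PSL(2, R)) * centerQuotientCongr θ = 1 := by
  rw [← centerQuotientCongr_mul, mul_self_of_mem_outerReps hθ, centerQuotientCongr_one]

end OuterAutomorphisms

section ProjectiveGeneralLinear

open ZOmega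
open Matrix.SpecialLinearGroup (toGL)
open Matrix.ProjGenLinGroup (mk mk_eq_mk_iff)
open Matrix.ProjectiveSpecialLinearGroup (toPGL toPGL_injective)

/-- The diagonal matrix with entries `1` and `-1`. -/
def glDiag (R : Type*) [CommRing R] : GL (Fin 2) R :=
  ⟨!![1, 0; 0, -1], !![1, 0; 0, -1], by simp [Matrix.one_fin_two], by simp [Matrix.one_fin_two]⟩

variable {R : Type*} [CommRing R]

theorem mk_glDiag_mul_self : mk (glDiag R) * mk (glDiag R) = 1 := by
  rw [← map_mul, show glDiag R * glDiag R = 1 from mul_inv_cancel (glDiag R), map_one]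

theorem glDiag_mul_toGL (A : SL(2, R)) : glDiag R * toGL A = toGL (diagConj A) * glDiag R := by
  ext i j
  fin_cases i <;> fin_cases j <;>
    simp [glDiag, diagConj_apply, Matrix.mul_apply, Fin.sum_univ_two]

theorem mk_glDiag_mul_toPGL (x : PSL(2, R)) :
    mk (glDiag R) * toPGL x = toPGL (centerQuotientCongr diagConj x) * mk (glDiag R) := by
  obtain ⟨A, rfl⟩ := pslMk_surjective x
  exact congrArg mk (glDiag_mul_toGL A)

theorem mk_glDiag_notMem_range : mk (glDiag ZOmega) ∉ (toPGL (n := Fin 2) (R := ZOmega)).range := by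
  rintro ⟨x, hx⟩
  obtain ⟨A, rfl⟩ := pslMk_surjective x
  obtain ⟨u, hu⟩ := mk_eq_mk_iff.mp hx
  have hdet := congrArg (fun g : GL (Fin 2) ZOmega => g.1.det) hu
  refine sq_ne_neg_one (u : ZOmega) ?_
  simpa [glDiag, Matrix.det_fin_two_of] using hdet

theorem mk_mem_range_of_det_eq_sq {g : GL (Fin 2) R} {s : R} (hs : IsUnit s)
    (h : (g : Matrix (Fin 2) (Fin 2) R).det = s ^ 2) :
    mk g ∈ (toPGL (n := Fin 2) (R := R)).range := by
  obtain ⟨u, rfl⟩ := hs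
  refine ⟨pslMk ⟨(↑u⁻¹ : R) • (g : Matrix (Fin 2) (Fin 2) R), ?_⟩, mk_eq_mk_iff.mpr ⟨u, ?_⟩⟩
  · rw [Matrix.det_smul, h, Fintype.card_fin, ← mul_pow, Units.inv_mul, one_pow]
  · ext i j
    have hcancel : (↑u⁻¹ : R) * g i j * u = g i j := by rw [mul_right_comm, u.inv_mul, one_mul]
    simpa [Matrix.SpecialLinearGroup.toGL] using hcancel

theorem mk_mem_range_or (g : GL (Fin 2) ZOmega) :
    mk g ∈ (toPGL (n := Fin 2) (R := ZOmega)).range ∨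
      mk g * mk (glDiag ZOmega) ∈ (toPGL (n := Fin 2) (R := ZOmega)).range := by
  obtain ⟨s, hs, h | h⟩ := exists_sq_eq_or_neg_sq_eq ((Matrix.isUnit_iff_isUnit_det _).mp g.isUnit)
  · exact Or.inl (mk_mem_range_of_det_eq_sq hs h)
  · rw [← map_mul]
    refine Or.inr (mk_mem_range_of_det_eq_sq hs ?_)
    rw [Units.val_mul, Matrix.det_mul, h, glDiag, Matrix.det_fin_two_of]
    ring

theorem nonempty_pgl_mulEquiv
    (h : (centerQuotientCongr diagConj : MulAut PSL(2, ZOmega)) *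
      centerQuotientCongr diagConj = 1) :
    Nonempty (PGL(2, ZOmega) ≃* InvolutionProduct h) :=
  InvolutionProduct.nonempty_mulEquiv toPGL_injective mk_glDiag_mul_self mk_glDiag_mul_toPGL
    mk_glDiag_notMem_range fun d => by
      obtain ⟨g, rfl⟩ := Matrix.ProjGenLinGroup.mk_surjective d
      exact mk_mem_range_or g

end ProjectiveGeneralLinear

section AutomorphismClassification

open ZOmega
open Matrix.SpecialLinearGroup (toGL coeMonoidHom)
open Matrix.ProjGenLinGroup (mk)
open Matrix.ProjectiveSpecialLinearGroup (toPGL toPGL_injective)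

theorem conj_of_mk_mul_toPGL {φ : MulAut PSL(2, ZOmega)} {θ : MulAut SL(2, ZOmega)}
    {γ : PSL(2, ZOmega)}
    (h : ∀ x, toPGL γ * toPGL (pslMk (θ x)) = toPGL (φ (pslMk x)) * toPGL γ) :
    φ = MulAut.conj γ * centerQuotientCongr θ := by
  ext x
  obtain ⟨A, rfl⟩ := pslMk_surjective x
  rw [MulAut.mul_apply, MulAut.conj_apply, centerQuotientCongr_pslMk, eq_mul_inv_iff_mul_eq]
  exact toPGL_injective (by rw [map_mul, map_mul, h])

theorem exists_conj_of_semiconjBy {φ : MulAut PSL(2, ZOmega)} {θ : MulAut SL(2, ZOmega)}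
    {g : GL (Fin 2) ZOmega}
    (h : ∀ x, ∃ y, φ (pslMk x) = pslMk y ∧ SemiconjBy g (toGL (θ x)) (toGL y)) :
    ∃ γ, φ = MulAut.conj γ * centerQuotientCongr θ ∨
      φ = MulAut.conj γ * centerQuotientCongr (diagConj * θ) := by
  have hmk : ∀ x, mk g * toPGL (pslMk (θ x)) = toPGL (φ (pslMk x)) * mk g := by
    intro x
    obtain ⟨y, hy, hxy⟩ := h x
    rw [hy]
    exact congrArg mk hxy
  obtain ⟨γ, hγ⟩ | ⟨γ, hγ⟩ := mk_mem_range_or g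
  · exact ⟨γ, Or.inl (conj_of_mk_mul_toPGL fun x => by rw [hγ, hmk])⟩
  · refine ⟨γ, Or.inr (conj_of_mk_mul_toPGL fun x => ?_)⟩
    rw [MulAut.mul_apply, ← centerQuotientCongr_pslMk, hγ, mul_assoc, mk_glDiag_mul_toPGL,
      centerQuotientCongr_pslMk, centerQuotientCongr_pslMk, ← MulAut.mul_apply, diagConj_mul_self,
      MulAut.one_apply, ← mul_assoc, hmk, mul_assoc]

/-- The first of three generators of order three in `PSL(2, ℤ[ω])`. -/
def genP : SL(2, ZOmega) := slMk 0 (-1) 1 (-1) (by ring)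

/-- The second of three generators of order three in `PSL(2, ℤ[ω])`; it fixes infinity. -/
def genQ : SL(2, ZOmega) := slMk ω (-ω) 0 (ω ^ 2) (by decide)

/-- The third of three generators of order three in `PSL(2, ℤ[ω])`; it fixes infinity. -/
def genR : SL(2, ZOmega) := slMk (ω ^ 2) (-ω ^ 2) 0 ω (by decide)

theorem eq_top_of_genP_mem_of_genQ_mem_of_genR_mem {K : Subgroup SL(2, ZOmega)} (hP : genP ∈ K)
    (hQ : genQ ∈ K) (hR : genR ∈ K) : K = ⊤ := by
  have hD : slD ∈ K := by
    rw [show slD = (genQ * genR⁻¹) * (genQ * genR⁻¹) by decide]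
    exact K.mul_mem (K.mul_mem hQ (K.inv_mem hR)) (K.mul_mem hQ (K.inv_mem hR))
  have hS : slS ∈ K := by
    rw [show slS = (genP * genR⁻¹ * slD⁻¹)⁻¹ by decide]
    exact K.inv_mem (K.mul_mem (K.mul_mem hP (K.inv_mem hR)) (K.inv_mem hD))
  have hT : slT 1 ∈ K := by
    rw [show (slT 1 : SL(2, ZOmega)) = (slS * genP)⁻¹ by decide]
    exact K.inv_mem (K.mul_mem hS hP)
  exact eq_top_of_generators_mem hS hT hD

theorem forall_semiconjBy_of_generators {φ : MulAut PSL(2, ZOmega)} {θ : MulAut SL(2, ZOmega)}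
    {M : Type*} [Monoid M] (ι : SL(2, ZOmega) →* M) {g : M}
    (h : ∀ x ∈ ({genP, genQ, genR} : Set SL(2, ZOmega)),
      ∃ y, φ (pslMk x) = pslMk y ∧ SemiconjBy g (ι (θ x)) (ι y)) (x : SL(2, ZOmega)) :
    ∃ y, φ (pslMk x) = pslMk y ∧ SemiconjBy g (ι (θ x)) (ι y) := by
  let K : Subgroup SL(2, ZOmega) :=
    { carrier := {x | ∃ y, φ (pslMk x) = pslMk y ∧ SemiconjBy g (ι (θ x)) (ι y)}
      one_mem' := ⟨1, by simp, by simp⟩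
      mul_mem' := by
        rintro a b ⟨A, hA, hA'⟩ ⟨B, hB, hB'⟩
        refine ⟨A * B, by simp only [map_mul, hA, hB], ?_⟩
        simpa only [map_mul] using hA'.mul_right hB'
      inv_mem' := by
        rintro a ⟨A, hA, hA'⟩
        refine ⟨A⁻¹, by simp only [map_inv, hA], ?_⟩
        have hunits : SemiconjBy g ↑(ι.toHomUnits (θ a)) ↑(ι.toHomUnits A) := hA'
        have hinv := hunits.units_inv_right
        rwa [← map_inv, ← map_inv, ← map_inv] at hinv }
  have hK : K = ⊤ := eq_top_of_genP_mem_of_genQ_mem_of_genR_mem (h _ (by simp)) (h _ (by simp))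
    (h _ (by simp))
  exact Subgroup.eq_top_iff' K |>.mp hK x

/-- The trace relations satisfied by the lifts of trace `-1` of the images of `genP`, `genQ`, `genR`
under an automorphism of `PSL(2, ℤ[ω])`. -/
structure HasStandardTraces (P Q R : SL(2, ZOmega)) : Prop where
  trace_fst : slTrace P = -1
  trace_snd : slTrace Q = -1
  trace_trd : slTrace R = -1
  trace_fst_mul_inv_snd : slTrace (P * Q⁻¹) = 0
  trace_fst_mul_inv_trd : slTrace (P * R⁻¹) = 0
  trace_snd_mul_trd : slTrace (Q * R) = 2
  snd_mul_trd_ne_one : Q * R ≠ 1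

theorem exists_hasStandardTraces (φ : MulAut PSL(2, ZOmega)) :
    ∃ P Q R, φ (pslMk genP) = pslMk P ∧ φ (pslMk genQ) = pslMk Q ∧ φ (pslMk genR) = pslMk R ∧
      HasStandardTraces P Q R := by
  have hne : ∀ {X : SL(2, ZOmega)}, X ≠ 1 → X ≠ -1 → φ (pslMk X) ≠ 1 := fun h1 h2 h =>
    (pslMk_eq_one_iff.mp ((MulEquiv.map_eq_one_iff φ).mp h)).elim h1 h2
  have hpow : ∀ {X : SL(2, ZOmega)} (n : ℕ), X ^ n = 1 ∨ X ^ n = -1 → φ (pslMk X) ^ n = 1 := by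
    intro X n h
    rw [← map_pow, ← map_pow, pslMk_eq_one_iff.mpr h, map_one]
  have hlift : ∀ {X : SL(2, ZOmega)}, X ≠ 1 → X ≠ -1 → (X ^ 3 = 1 ∨ X ^ 3 = -1) →
      ∃ A, φ (pslMk X) = pslMk A ∧ slTrace A = -1 := by
    intro X h1 h2 h3
    obtain ⟨A, hA, htrace⟩ := exists_pslMk_eq_slTrace_eq_neg_one (hne h1 h2) (hpow 3 h3)
    exact ⟨A, hA.symm, htrace⟩
  obtain ⟨P, hP, htP⟩ := hlift (X := genP) (by decide) (by decide) (by decide)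
  obtain ⟨Q, hQ, htQ⟩ := hlift (X := genQ) (by decide) (by decide) (by decide)
  obtain ⟨R, hR, htR⟩ := hlift (X := genR) (by decide) (by decide) (by decide)
  have hPQ : φ (pslMk (genP * genQ⁻¹)) = pslMk (P * Q⁻¹) := by simp only [map_mul, map_inv, hP, hQ]
  have hPR : φ (pslMk (genP * genR⁻¹)) = pslMk (P * R⁻¹) := by simp only [map_mul, map_inv, hP, hR]
  have hQR : φ (pslMk (genQ * genR)) = pslMk (Q * R) := by simp only [map_mul, hQ, hR]
  have hQR' : φ (pslMk (genQ * genR⁻¹)) = pslMk (Q * R⁻¹) := by simp only [map_mul, map_inv, hQ, hR]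
  refine ⟨P, Q, R, hP, hQ, hR, htP, htQ, htR, ?_, ?_, ?_, ?_⟩
  · rw [slTrace_eq_zero_of_sq_eq_one] <;> rw [← hPQ]
    · exact hne (by decide) (by decide)
    · exact hpow 2 (by decide)
  · rw [slTrace_eq_zero_of_sq_eq_one] <;> rw [← hPR]
    · exact hne (by decide) (by decide)
    · exact hpow 2 (by decide)
  · apply slTrace_mul_eq_two htQ htR <;> first | rw [← hQR'] | rw [← hQR, ← map_pow, ← map_pow]
    · exact hne (by decide) (by decide)
    · exact hpow 3 (by decide)
    · exact hne (by decide) (by decide)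
  · intro h
    rw [h, map_one] at hQR
    exact hne (by decide) (by decide) hQR

namespace HasStandardTraces

variable {P Q R : SL(2, ZOmega)}

theorem conj (h : HasStandardTraces P Q R) (M : SL(2, ZOmega)) :
    HasStandardTraces (M * P * M⁻¹) (M * Q * M⁻¹) (M * R * M⁻¹) where
  trace_fst := by rw [slTrace_conj, h.trace_fst]
  trace_snd := by rw [slTrace_conj, h.trace_snd]
  trace_trd := by rw [slTrace_conj, h.trace_trd]
  trace_fst_mul_inv_snd := by rw [conj_inv, conj_mul, slTrace_conj, h.trace_fst_mul_inv_snd]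
  trace_fst_mul_inv_trd := by rw [conj_inv, conj_mul, slTrace_conj, h.trace_fst_mul_inv_trd]
  trace_snd_mul_trd := by rw [conj_mul, slTrace_conj, h.trace_snd_mul_trd]
  snd_mul_trd_ne_one := by rw [conj_mul, Ne, conj_eq_one_iff]; exact h.snd_mul_trd_ne_one

end HasStandardTraces

theorem apply_zero_zero_eq_one_of_slTrace_eq_two {A : SL(2, ZOmega)} (htrace : slTrace A = 2)
    (h10 : A 1 0 = 0) : A 0 0 = 1 ∧ A 1 1 = 1 := by
  have hdet := sl_det A
  rw [slTrace_eq] at htrace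
  have hsq : (A 0 0 - 1) ^ 2 = 0 := by
    linear_combination A 0 0 * htrace - hdet - A 0 1 * h10
  have h00 : A 0 0 = 1 := sub_eq_zero.mp (sq_eq_zero_iff.mp hsq)
  exact ⟨h00, by linear_combination htrace - h00⟩

theorem exists_conj_apply_one_zero_eq_zero {A : SL(2, ZOmega)} (htrace : slTrace A = 2) :
    ∃ M : SL(2, ZOmega), (M * A * M⁻¹) 1 0 = 0 := by
  have hdet := sl_det A
  rw [slTrace_eq] at htrace
  -- The second row of `M` annihilates an eigenvector of `A` for the eigenvalue `1`.
  obtain ⟨a, c, hac, h0, h1⟩ : ∃ a c : ZOmega, ¬(a = 0 ∧ c = 0) ∧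
      A 0 0 * a + A 0 1 * c = a ∧ A 1 0 * a + A 1 1 * c = c := by
    by_cases h10 : A 0 0 - 1 = 0 ∧ A 1 0 = 0
    · refine ⟨1, 0, by simp, by linear_combination h10.1, by linear_combination h10.2⟩
    · exact ⟨A 0 0 - 1, A 1 0, h10, by linear_combination A 0 0 * htrace - hdet,
        by linear_combination A 1 0 * htrace⟩
  obtain ⟨M, -, hM⟩ := exists_mem_mul_add_mul_eq_zero (K := ⊤) (Subgroup.mem_top _)
    (fun _ => Subgroup.mem_top _) a c
  refine ⟨M, ?_⟩
  have hconj : (M * A * M⁻¹) 1 0 =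
      (M 1 0 * A 0 0 + M 1 1 * A 1 0) * M 1 1 - (M 1 0 * A 0 1 + M 1 1 * A 1 1) * M 1 0 := by
    simp only [sl_mul_apply, sl_inv_eq, coe_slMk, Matrix.of_apply, Matrix.cons_val',
      Matrix.cons_val_zero, Matrix.cons_val_one, Matrix.cons_val_fin_one]
    ring
  rw [hconj]
  have ha : a * ((M 1 0 * A 0 0 + M 1 1 * A 1 0) * M 1 1 - (M 1 0 * A 0 1 + M 1 1 * A 1 1) * M 1 0)
      = 0 := by
    linear_combination M 1 1 * M 1 0 * h0 + M 1 1 ^ 2 * h1 +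
      (M 1 1 - M 1 0 * A 0 1 - M 1 1 * A 1 1) * hM
  have hc : c * ((M 1 0 * A 0 0 + M 1 1 * A 1 0) * M 1 1 - (M 1 0 * A 0 1 + M 1 1 * A 1 1) * M 1 0)
      = 0 := by
    linear_combination -M 1 0 ^ 2 * h0 - M 1 1 * M 1 0 * h1 +
      (M 1 0 * A 0 0 + M 1 1 * A 1 0 - M 1 0) * hM
  by_contra hne
  exact hac ⟨(mul_eq_zero.mp ha).resolve_right hne, (mul_eq_zero.mp hc).resolve_right hne⟩

namespace HasStandardTraces

variable {P Q R : SL(2, ZOmega)}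

theorem apply_one_zero (h : HasStandardTraces P Q R) (hQR : (Q * R) 1 0 = 0) :
    Q 1 0 = 0 ∧ R 1 0 = 0 := by
  obtain ⟨h00, h11⟩ := apply_zero_zero_eq_one_of_slTrace_eq_two h.trace_snd_mul_trd hQR
  have h01 : (Q * R) 0 1 ≠ 0 := fun h01 => h.snd_mul_trd_ne_one <| by
    apply sl_ext <;> simp only [h00, h01, hQR, h11] <;> rfl
  have htQ := h.trace_snd
  have htR := h.trace_trd
  rw [← inv_mul_cancel_left Q R] at htR ⊢
  generalize Q * R = N at *
  simp only [slTrace_eq, sl_mul_apply, sl_inv_eq, coe_slMk, Matrix.of_apply, Matrix.cons_val',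
    Matrix.cons_val_zero, Matrix.cons_val_one, Matrix.cons_val_fin_one] at htQ htR ⊢
  have hmul : Q 1 0 * N 0 1 = 0 := by
    linear_combination htQ - htR + Q 1 1 * h00 + Q 0 0 * h11 - Q 0 1 * hQR
  have h10 : Q 1 0 = 0 := (mul_eq_zero.mp hmul).resolve_right h01
  exact ⟨h10, by linear_combination -N 0 0 * h10 + Q 0 0 * hQR⟩

theorem exists_conj_apply_one_zero (h : HasStandardTraces P Q R) :
    ∃ M : SL(2, ZOmega), (M * Q * M⁻¹) 1 0 = 0 ∧ (M * R * M⁻¹) 1 0 = 0 := by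
  obtain ⟨M, hM⟩ := exists_conj_apply_one_zero_eq_zero h.trace_snd_mul_trd
  exact ⟨M, (h.conj M).apply_one_zero (by rwa [conj_mul])⟩

end HasStandardTraces

theorem semiconjBy_of_entries {A : SL(2, ZOmega)} {b d x y z w : ZOmega} (h00 : x + b * z = A 0 0)
    (h01 : y + b * w = A 0 0 * b + A 0 1 * d) (h10 : d * z = A 1 0)
    (h11 : d * w = A 1 0 * b + A 1 1 * d) :
    SemiconjBy !![1, b; 0, d] !![x, y; z, w] A.1 := by
  rw [SemiconjBy, Matrix.eta_fin_two A.1, Matrix.mul_fin_two, Matrix.mul_fin_two]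
  simp only [one_mul, zero_mul, mul_one, mul_zero, zero_add, add_zero, h00, h01, h10, h11]

namespace HasStandardTraces

variable {P Q R : SL(2, ZOmega)}

theorem entries (h : HasStandardTraces P Q R) (hQ : Q 1 0 = 0) (hR : R 1 0 = 0) :
    Q 0 0 ^ 2 + Q 0 0 + 1 = 0 ∧ Q 1 1 = Q 0 0 ^ 2 ∧ R 0 0 = Q 0 0 ^ 2 ∧ R 1 1 = Q 0 0 := by
  have hdetQ := sl_det Q
  have htQ := h.trace_snd
  have htR := h.trace_trd
  have htQR := h.trace_snd_mul_trd
  have hdetQR := sl_det (Q * R)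
  have hQR10 : (Q * R) 1 0 = 0 := by rw [sl_mul_apply, hQ, hR, zero_mul, mul_zero, add_zero]
  obtain ⟨h00, -⟩ := apply_zero_zero_eq_one_of_slTrace_eq_two htQR hQR10
  rw [sl_mul_apply, hR, mul_zero, add_zero] at h00
  rw [slTrace_eq] at htQ htR
  have hq : Q 0 0 ^ 2 + Q 0 0 + 1 = 0 := by
    linear_combination Q 0 0 * htQ - hdetQ - Q 0 1 * hQ
  have hR00 : R 0 0 = Q 0 0 ^ 2 := by
    linear_combination Q 0 0 ^ 2 * h00 + (1 - Q 0 0) * R 0 0 * hq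
  exact ⟨hq, by linear_combination htQ - hq, hR00, by linear_combination htR - hR00 - hq⟩

theorem semiconjBy (h : HasStandardTraces P Q R) (hQ : Q 1 0 = 0) (hR : R 1 0 = 0) :
    SemiconjBy !![1, P 0 0; 0, P 1 0] !![0, -1; 1, -1] P.1 ∧
      SemiconjBy !![1, P 0 0; 0, P 1 0] !![Q 0 0, -Q 0 0; 0, Q 0 0 ^ 2] Q.1 ∧
      SemiconjBy !![1, P 0 0; 0, P 1 0] !![Q 0 0 ^ 2, -Q 0 0 ^ 2; 0, Q 0 0] R.1 := by
  obtain ⟨-, hQ11, hR00, hR11⟩ := h.entries hQ hR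
  have hdetP := sl_det P
  have htP := h.trace_fst
  have htPQ := h.trace_fst_mul_inv_snd
  have htPR := h.trace_fst_mul_inv_trd
  simp only [slTrace_eq, sl_mul_apply, sl_inv_eq, coe_slMk, Matrix.of_apply, Matrix.cons_val',
    Matrix.cons_val_zero, Matrix.cons_val_one, Matrix.cons_val_fin_one, hQ, hR, hQ11, hR00, hR11]
    at htP htPQ htPR
  refine ⟨semiconjBy_of_entries ?_ ?_ ?_ ?_, semiconjBy_of_entries ?_ ?_ ?_ ?_,
    semiconjBy_of_entries ?_ ?_ ?_ ?_⟩
  · ring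
  · linear_combination hdetP - P 0 0 * htP
  · ring
  · linear_combination -P 1 0 * htP
  · ring
  · linear_combination htPQ - Q 0 0 * htP
  · rw [mul_zero, hQ]
  · rw [hQ, hQ11]; ring
  · rw [hR00]; ring
  · rw [hR00]; linear_combination htPR - Q 0 0 ^ 2 * htP
  · rw [mul_zero, hR]
  · rw [hR, hR11]; ring

end HasStandardTraces

theorem exists_apply_generators {q : ZOmega} (hq : q ^ 2 + q + 1 = 0) :
    ∃ θ : MulAut SL(2, ZOmega), (θ = 1 ∨ θ = starAut) ∧ (θ genP).1 = !![0, -1; 1, -1] ∧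
      (θ genQ).1 = !![q, -q; 0, q ^ 2] ∧ (θ genR).1 = !![q ^ 2, -q ^ 2; 0, q] := by
  rcases eq_omega_or_eq_star_omega hq with rfl | rfl
  · exact ⟨1, Or.inl rfl, by decide, by decide, by decide⟩
  · exact ⟨starAut, Or.inr rfl, by decide, by decide, by decide⟩

theorem isUnit_of_semiconjBy {φ : MulAut PSL(2, ZOmega)} {θ : MulAut SL(2, ZOmega)} {b d : ZOmega}
    (h : ∀ x, ∃ y, φ (pslMk x) = pslMk y ∧ SemiconjBy !![1, b; 0, d] (θ x).1 y.1) : IsUnit d := by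
  obtain ⟨z, hz⟩ := φ.surjective (pslMk (slMk 1 0 1 1 (by ring)))
  obtain ⟨x, rfl⟩ := pslMk_surjective z
  obtain ⟨y, hy, hxy⟩ := h x
  have h10 : d * (θ x) 1 0 = y 1 0 := by
    simpa [Matrix.mul_apply, Fin.sum_univ_two] using congrFun (congrFun hxy.eq 1) 0
  have hunit : y 1 0 = 1 ∨ y 1 0 = -1 := by
    rcases pslMk_eq_iff.mp (hy.symm.trans hz) with heq | heq
    · exact Or.inl (by rw [heq]; rfl)
    · exact Or.inr (by rw [heq]; rfl)
  refine isUnit_of_mul_isUnit_left (h10 ▸ ?_ : IsUnit (d * (θ x) 1 0))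
  rcases hunit with h1 | h1 <;> rw [h1]
  exacts [isUnit_one, isUnit_one.neg]

theorem exists_conj_of_upper {φ : MulAut PSL(2, ZOmega)} {P Q R : SL(2, ZOmega)}
    (hP : φ (pslMk genP) = pslMk P) (hQ : φ (pslMk genQ) = pslMk Q)
    (hR : φ (pslMk genR) = pslMk R) (h : HasStandardTraces P Q R) (hQ10 : Q 1 0 = 0)
    (hR10 : R 1 0 = 0) :
    ∃ γ, ∃ θ ∈ outerReps ZOmega, φ = MulAut.conj γ * centerQuotientCongr θ := by
  obtain ⟨hgP, hgQ, hgR⟩ := h.semiconjBy hQ10 hR10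
  obtain ⟨θ, hθ, hθP, hθQ, hθR⟩ := exists_apply_generators (h.entries hQ10 hR10).1
  have hcoe := forall_semiconjBy_of_generators (φ := φ) (θ := θ) coeMonoidHom
    (g := !![1, P 0 0; 0, P 1 0]) <| by
      rintro x (rfl | rfl | rfl)
      · exact ⟨P, hP, by rwa [← hθP] at hgP⟩
      · exact ⟨Q, hQ, by rwa [← hθQ] at hgQ⟩
      · exact ⟨R, hR, by rwa [← hθR] at hgR⟩
  have hdet : IsUnit (!![1, P 0 0; 0, P 1 0] : Matrix (Fin 2) (Fin 2) ZOmega).det := by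
    simpa [Matrix.det_fin_two] using isUnit_of_semiconjBy hcoe
  obtain ⟨g, hg⟩ := (Matrix.isUnit_iff_isUnit_det _).mpr hdet
  obtain ⟨γ, hγ | hγ⟩ := exists_conj_of_semiconjBy (φ := φ) (θ := θ) (g := g) fun x => by
    obtain ⟨y, hy, hxy⟩ := hcoe x
    exact ⟨y, hy, Units.ext (by rw [← hg] at hxy; exact hxy)⟩
  · exact ⟨γ, θ, hθ.elim Or.inl (Or.inr ∘ Or.inr ∘ Or.inl), hγ⟩
  · exact ⟨γ, diagConj * θ, diagConj_mul_mem_outerReps hθ, hγ⟩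

theorem exists_eq_conj_mul_centerQuotientCongr (φ : MulAut PSL(2, ZOmega)) :
    ∃ γ, ∃ θ ∈ outerReps ZOmega, φ = MulAut.conj γ * centerQuotientCongr θ := by
  obtain ⟨P, Q, R, hP, hQ, hR, h⟩ := exists_hasStandardTraces φ
  obtain ⟨M, hMQ, hMR⟩ := h.exists_conj_apply_one_zero
  obtain ⟨γ, θ, hθ, hφ⟩ := exists_conj_of_upper (φ := MulAut.conj (pslMk M) * φ)
    (by simp only [MulAut.mul_apply, MulAut.conj_apply, hP, map_mul, map_inv])
    (by simp only [MulAut.mul_apply, MulAut.conj_apply, hQ, map_mul, map_inv])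
    (by simp only [MulAut.mul_apply, MulAut.conj_apply, hR, map_mul, map_inv]) (h.conj M) hMQ hMR
  refine ⟨(pslMk M)⁻¹ * γ, θ, hθ, ?_⟩
  rw [map_mul, mul_assoc, ← hφ, map_inv, inv_mul_cancel_left]

end AutomorphismClassification

section CoxeterExtension

open ZOmega

/-- The exponents in the Coxeter presentation of `Λ₁`. -/
def lambda1Exponent : Fin 4 → Fin 4 → ℕ :=
  ![![1, 2, 2, 3], ![2, 1, 3, 3], ![2, 3, 1, 3], ![3, 3, 3, 1]]

/-- The Coxeter matrix of `Λ₁`. -/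
def lambda1Matrix : CoxeterMatrix (Fin 4) where
  M := Matrix.of lambda1Exponent
  isSymm := by decide
  diagonal := by simp only [Matrix.of_apply]; decide
  off_diagonal := by simp only [Matrix.of_apply]; decide

theorem lambda1Matrix_apply (i j : Fin 4) : lambda1Matrix i j = lambda1Exponent i j := rfl

theorem isLiftable_of_lt {B G : Type*} [LinearOrder B] [Group G] {M : CoxeterMatrix B} {f : B → G}
    (hself : ∀ i, f i * f i = 1) (hlt : ∀ i j, i < j → (f i * f j) ^ M i j = 1) :
    M.IsLiftable f := by
  intro i j
  rcases lt_trichotomy i j with hij | rfl | hij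
  · exact hlt i j hij
  · rw [M.diagonal, pow_one, hself]
  · have hinv : f i * f j = (f j * f i)⁻¹ := by
      rw [_root_.mul_inv_rev, inv_eq_of_mul_eq_one_left (hself i),
        inv_eq_of_mul_eq_one_left (hself j)]
    rw [hinv, M.symmetric, inv_pow, hlt j i hij, inv_one]

theorem lambda1_isLiftable :
    lambda1Matrix.IsLiftable (PresentedGroup.of : Fin 4 → Lambda1) := by
  refine isLiftable_of_lt (fun i => ?_) fun i j hij => ?_
  · rw [← sq]
    refine PresentedGroup.one_of_mem (x := FreeGroup.of i ^ 2) ?_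
    fin_cases i <;> simp [lambda1Rels]
  · refine PresentedGroup.one_of_mem (x := (FreeGroup.of i * FreeGroup.of j) ^ lambda1Matrix i j) ?_
    fin_cases i <;> fin_cases j <;> first | exact absurd hij (by decide) | skip
    all_goals simp [lambda1Rels, lambda1Matrix_apply, lambda1Exponent]

theorem lift_simple_eq_one_of_mem_lambda1Rels {r : FreeGroup (Fin 4)} (hr : r ∈ lambda1Rels) :
    FreeGroup.lift lambda1Matrix.simple r = 1 := by
  have hpow := lambda1Matrix.toCoxeterSystem.simple_mul_simple_pow
  have hsq := lambda1Matrix.toCoxeterSystem.simple_sq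
  simp only [CoxeterMatrix.toCoxeterSystem_simple] at hpow hsq
  rcases hr with rfl | rfl | rfl | rfl | rfl | rfl | rfl | rfl | rfl | rfl <;>
    simp only [map_pow, map_mul, FreeGroup.lift_apply_of]
  exacts [hsq 0, hsq 1, hsq 2, hsq 3, hpow 0 1, hpow 0 2, hpow 0 3, hpow 1 2, hpow 1 3, hpow 2 3]

theorem nonempty_lambda1_mulEquiv : Nonempty (Lambda1 ≃* lambda1Matrix.Group) := by
  let cs := lambda1Matrix.toCoxeterSystem
  refine ⟨MonoidHom.toMulEquiv
    (PresentedGroup.toGroup fun _ => lift_simple_eq_one_of_mem_lambda1Rels)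
    (cs.lift ⟨_, lambda1_isLiftable⟩) ?_ ?_⟩
  · refine PresentedGroup.ext fun i => ?_
    rw [MonoidHom.comp_apply, PresentedGroup.toGroup.of, MonoidHom.id_apply]
    exact cs.lift_apply_simple lambda1_isLiftable i
  · refine cs.ext_simple fun i => ?_
    rw [MonoidHom.comp_apply, cs.lift_apply_simple lambda1_isLiftable, PresentedGroup.toGroup.of]
    rfl

/-- The action of `SL₂` on matrices by `X ↦ A X Aᴴ`. -/
def hermitianAction : SL(2, ZOmega) →* AddMonoid.End (Matrix (Fin 2) (Fin 2) ZOmega) where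
  toFun A :=
    { toFun := fun X => A.1 * X * A.1ᴴ
      map_zero' := by rw [mul_zero, zero_mul]
      map_add' := fun X Y => by rw [mul_add, add_mul] }
  map_one' := by
    ext1 X
    change (1 : Matrix (Fin 2) (Fin 2) ZOmega) * X * 1ᴴ = X
    rw [conjTranspose_one, one_mul, mul_one]
  map_mul' A B := by
    ext1 X
    change A.1 * B.1 * X * (A.1 * B.1)ᴴ = A.1 * (B.1 * X * B.1ᴴ) * A.1ᴴ
    simp only [conjTranspose_mul, Matrix.mul_assoc]

theorem hermitianAction_apply (A : SL(2, ZOmega)) (X : Matrix (Fin 2) (Fin 2) ZOmega) :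
    hermitianAction A X = A.1 * X * A.1ᴴ := rfl

/-- The action of `PSL₂` on matrices induced by `X ↦ A X Aᴴ`. -/
def pslHermitianAction : PSL(2, ZOmega) →* (AddMonoid.End (Matrix (Fin 2) (Fin 2) ZOmega))ˣ :=
  QuotientGroup.lift _ hermitianAction.toHomUnits <| by
    intro A hA
    rw [MonoidHom.mem_ker]
    ext1
    rw [MonoidHom.coe_toHomUnits]
    rcases pslMk_eq_one_iff.mp ((QuotientGroup.eq_one_iff A).mpr hA) with rfl | rfl
    · rw [map_one, Units.val_one]
    · ext1 X
      change -1 * X * (-1)ᴴ = X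
      rw [conjTranspose_neg, conjTranspose_one, neg_one_mul, mul_neg_one, neg_neg]

/-- The involution `X ↦ D X̄ D`, where `D` is the diagonal matrix with entries `1, -1`. -/
def conjInvolution : AddMonoid.End (Matrix (Fin 2) (Fin 2) ZOmega) where
  toFun X := !![star (X 0 0), -star (X 0 1); -star (X 1 0), star (X 1 1)]
  map_zero' := by ext1 i j; fin_cases i <;> fin_cases j <;> simp
  map_add' X Y := by ext1 i j; fin_cases i <;> fin_cases j <;> simp [add_comm]

theorem conjInvolution_apply (X : Matrix (Fin 2) (Fin 2) ZOmega) :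
    conjInvolution X = !![star (X 0 0), -star (X 0 1); -star (X 1 0), star (X 1 1)] := rfl

theorem conjInvolution_mul_self : conjInvolution * conjInvolution = 1 := by
  ext1 X
  ext1 i j
  fin_cases i <;> fin_cases j <;> simp [conjInvolution_apply]

/-- The automorphism of `SL₂` given by entrywise conjugation composed with conjugation by the
diagonal matrix with entries `1, -1`. -/
abbrev starDiagConj : MulAut SL(2, ZOmega) := starAut * diagConj

theorem conjInvolution_mul_hermitianAction (A : SL(2, ZOmega)) :
    conjInvolution * hermitianAction A =
      hermitianAction (starDiagConj A) * conjInvolution := by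
  ext1 X
  ext1 i j
  fin_cases i <;> fin_cases j <;>
    simp only [Fin.zero_eta, Fin.mk_one, AddMonoid.End.coe_mul, Function.comp_apply,
      MulAut.mul_apply, conjInvolution_apply, hermitianAction_apply, Matrix.mul_apply,
      Matrix.conjTranspose_apply, Fin.sum_univ_two, starAut_apply, diagConj_apply,
      coe_slMk, Matrix.of_apply, Matrix.cons_val', Matrix.cons_val_zero,
      Matrix.cons_val_one, Matrix.cons_val_fin_one, star_add, star_mul', star_neg,
      star_star] <;>
    ring

variable {hθ : centerQuotientCongr starDiagConj *
  centerQuotientCongr starDiagConj = 1}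

/-- The extension of `pslHermitianAction` in which the involution acts by `conjInvolution`. -/
def extendedHermitianAction :
    InvolutionProduct hθ →* (AddMonoid.End (Matrix (Fin 2) (Fin 2) ZOmega))ˣ :=
  InvolutionProduct.lift pslHermitianAction
    (t := ⟨conjInvolution, conjInvolution, conjInvolution_mul_self, conjInvolution_mul_self⟩)
    (Units.ext conjInvolution_mul_self) fun x => by
      obtain ⟨A, rfl⟩ := pslMk_surjective x
      exact Units.ext (conjInvolution_mul_hermitianAction A)

/-- The linear parts of the four reflections that generate the extension by `Z ↦ -Z̄`. -/
def reflectionLinear : Fin 4 → SL(2, ZOmega) := ![slS, slD⁻¹, slD, slT 1]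

/-- The reflections of the extension corresponding to the Coxeter generators of `Λ₁`. -/
def reflection (i : Fin 4) : InvolutionProduct hθ :=
  InvolutionProduct.incl (pslMk (reflectionLinear i)) * InvolutionProduct.invol

theorem reflection_mul (i j : Fin 4) : (reflection i * reflection j : InvolutionProduct hθ) =
    InvolutionProduct.incl
      (pslMk (reflectionLinear i * starDiagConj (reflectionLinear j))) :=
  (InvolutionProduct.incl_mul_invol_mul_incl_mul_invol _ _).trans
    (by rw [centerQuotientCongr_pslMk, ← map_mul])

theorem reflection_isLiftable :
    lambda1Matrix.IsLiftable (reflection : Fin 4 → InvolutionProduct hθ) := by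
  have hpow : ∀ i j, (reflectionLinear i * starDiagConj (reflectionLinear j)) ^
      lambda1Matrix i j = 1 ∨ (reflectionLinear i * starDiagConj (reflectionLinear j)) ^
      lambda1Matrix i j = -1 := by decide
  intro i j
  rw [reflection_mul, ← map_pow, ← map_pow, pslMk_eq_one_iff.mpr (hpow i j), map_one]

/-- The homomorphism from the Coxeter group that sends simple reflections to `reflection`. -/
def reflectionHom : lambda1Matrix.Group →* InvolutionProduct hθ :=
  lambda1Matrix.toCoxeterSystem.lift ⟨reflection, reflection_isLiftable⟩

theorem reflectionHom_simple (i : Fin 4) :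
    reflectionHom (hθ := hθ) (lambda1Matrix.simple i) = reflection i :=
  lambda1Matrix.toCoxeterSystem.lift_apply_simple reflection_isLiftable i

theorem reflectionHom_surjective : Function.Surjective (reflectionHom (hθ := hθ)) := by
  rw [← MonoidHom.range_eq_top]
  set K := (reflectionHom (hθ := hθ)).range
  have hreflection : ∀ i, reflection i ∈ K := fun i => ⟨_, reflectionHom_simple i⟩
  have hD : InvolutionProduct.incl (pslMk slD) ∈ K := by
    have hmem := K.mul_mem (hreflection 1) (hreflection 2)
    rwa [reflection_mul, show reflectionLinear 1 * starDiagConj (reflectionLinear 2) = slD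
      by decide] at hmem
  have hinvol : InvolutionProduct.invol ∈ K := (K.mul_mem_cancel_left hD).mp (hreflection 2)
  have hlinear : ∀ i, InvolutionProduct.incl (pslMk (reflectionLinear i)) ∈ K := fun i =>
    (K.mul_mem_cancel_right hinvol).mp (hreflection i)
  have htop := eq_top_of_generators_mem (K := K.comap (InvolutionProduct.incl.comp pslMk))
    (hlinear 0) (hlinear 3) hD
  refine InvolutionProduct.eq_top_of_incl_mem (fun x => ?_) hinvol
  obtain ⟨A, rfl⟩ := pslMk_surjective x
  exact (Subgroup.eq_top_iff' _).mp htop A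

/-- The simple roots of `Λ₁` in the representation `extendedHermitianAction`. -/
def simpleRoot : Fin 4 → Matrix (Fin 2) (Fin 2) ZOmega :=
  ![!![-1, 0; 0, 1], !![0, ω ^ 2; ω, 0], !![0, ω; ω ^ 2, 0], !![1, 1; 1, 0]]

/-- A functional with value `1` on each simple root. -/
def height : Matrix (Fin 2) (Fin 2) ZOmega →+ ℤ where
  toFun X := 4 * (X 1 1).re + 3 * (X 0 0).re - 2 * (X 0 1).re + (X 0 1).im
  map_zero' := by simp
  map_add' X Y := by simp only [Matrix.add_apply, QuadraticAlgebra.re_add,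
    QuadraticAlgebra.im_add]; ring

theorem reflectionHom_injective : Function.Injective (reflectionHom (hθ := hθ)) := by
  let ρ := (Units.coeHom _).comp ((extendedHermitianAction (hθ := hθ)).comp reflectionHom)
  have hρ : ∀ i X, ρ (lambda1Matrix.simple i) X =
      (reflectionLinear i).1 * conjInvolution X * (reflectionLinear i).1ᴴ := by
    intro i X
    simp only [ρ, MonoidHom.comp_apply, reflectionHom_simple, reflection, map_mul,
      extendedHermitianAction, InvolutionProduct.lift_incl, InvolutionProduct.lift_invol]
    rfl
  have hroots : IsSimpleRootFamily lambda1Matrix.toCoxeterSystem ρ simpleRoot :=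
    { simplyLaced := by simp only [lambda1Matrix_apply]; decide
      apply_self := by simp only [CoxeterMatrix.toCoxeterSystem_simple, hρ]; decide
      apply_of_eq_two := by
        simp only [CoxeterMatrix.toCoxeterSystem_simple, hρ, lambda1Matrix_apply]; decide
      apply_of_eq_three := by
        simp only [CoxeterMatrix.toCoxeterSystem_simple, hρ, lambda1Matrix_apply]; decide }
  have hinj := hroots.injective_of_height_pos (L := height) (by decide)
  exact Function.Injective.of_comp (f := (Units.coeHom _).comp extendedHermitianAction) hinj

/-- The extension of `PSL(2, ℤ[ω])` by `starAut * diagConj` as a Coxeter group. -/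
noncomputable def reflectionEquiv : lambda1Matrix.Group ≃* InvolutionProduct hθ :=
  MulEquiv.ofBijective reflectionHom ⟨reflectionHom_injective, reflectionHom_surjective⟩

theorem reflectionEquiv_simple (i : Fin 4) :
    reflectionEquiv (hθ := hθ) (lambda1Matrix.simple i) = reflection i := reflectionHom_simple i

end CoxeterExtension

section Lambda2Relations

/-- The elements `x`, `y`, `z` satisfy the defining relations of `Λ₂`, the fourth of them stated as
the commutation of `z` and `y`. -/
structure Lambda2Relations {G : Type*} [Group G] (x y z : G) : Prop where
  x_mul_self : x * x = 1
  y_mul_self : y * y = 1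
  z_cubed : z ^ 3 = 1
  z_mul_y : z * y = y * z
  z_mul_x_cubed : (z * x) ^ 3 = 1
  x_mul_y_pow_six : (x * y) ^ 6 = 1

/-- The generator `x` of `Λ₂`. -/
def lambda2X : Lambda2 := PresentedGroup.of 0

/-- The generator `y` of `Λ₂`. -/
def lambda2Y : Lambda2 := PresentedGroup.of 1

/-- The generator `z` of `Λ₂`. -/
def lambda2Z : Lambda2 := PresentedGroup.of 2

theorem lambda2_hom_ext {G : Type*} [Group G] {f g : Lambda2 →* G}
    (hX : f lambda2X = g lambda2X) (hY : f lambda2Y = g lambda2Y) (hZ : f lambda2Z = g lambda2Z) :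
    f = g := by
  refine PresentedGroup.ext fun i => ?_
  fin_cases i
  exacts [hX, hY, hZ]

namespace Lambda2Relations

theorem generators : Lambda2Relations lambda2X lambda2Y lambda2Z := by
  have hrel : ∀ r ∈ lambda2Rels, PresentedGroup.mk lambda2Rels r = 1 :=
    fun r => PresentedGroup.one_of_mem
  have hsq : lambda2Y * lambda2Y = 1 :=
    (sq _).symm.trans (hrel (FreeGroup.of 1 ^ 2) (by simp [lambda2Rels]))
  have hconj : lambda2Z * lambda2Y * lambda2Z⁻¹ * lambda2Y = 1 :=
    hrel (FreeGroup.of 2 * FreeGroup.of 1 * (FreeGroup.of 2)⁻¹ * FreeGroup.of 1)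
      (by simp [lambda2Rels])
  exact
    { x_mul_self := (sq _).symm.trans (hrel (FreeGroup.of 0 ^ 2) (by simp [lambda2Rels]))
      y_mul_self := hsq
      z_cubed := hrel (FreeGroup.of 2 ^ 3) (by simp [lambda2Rels])
      z_mul_y := mul_inv_eq_iff_eq_mul.mp <|
        (eq_inv_of_mul_eq_one_left hconj).trans (inv_eq_of_mul_eq_one_left hsq)
      z_mul_x_cubed := hrel ((FreeGroup.of 2 * FreeGroup.of 0) ^ 3) (by simp [lambda2Rels])
      x_mul_y_pow_six := hrel ((FreeGroup.of 0 * FreeGroup.of 1) ^ 6) (by simp [lambda2Rels]) }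

variable {G : Type*} [Group G] {x y z : G} (h : Lambda2Relations x y z)

include h

theorem x_inv : x⁻¹ = x := inv_eq_of_mul_eq_one_left h.x_mul_self

theorem y_inv : y⁻¹ = y := inv_eq_of_mul_eq_one_left h.y_mul_self

theorem x_mul_z_cubed : (x * z) ^ 3 = 1 := by
  have hconj : x * z = z⁻¹ * (z * x) * z⁻¹⁻¹ := by group
  rw [hconj, conj_pow, h.z_mul_x_cubed, mul_one, mul_inv_cancel]

theorem y_mul_x_mul_y_mul_self : (y * x * y) * (y * x * y) = 1 := by
  rw [mul_assoc, ← mul_assoc y (y * x) y, ← mul_assoc y y x, h.y_mul_self, one_mul,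
    ← mul_assoc, mul_assoc y x x, h.x_mul_self, mul_one, h.y_mul_self]

theorem y_mul_x_mul_y_mul_z : y * x * y * z = y * (x * z) * y⁻¹ := by
  rw [h.y_inv, mul_assoc (y * x), ← h.z_mul_y]
  simp only [mul_assoc]

theorem inv_z : Lambda2Relations x y z⁻¹ where
  x_mul_self := h.x_mul_self
  y_mul_self := h.y_mul_self
  z_cubed := by rw [inv_pow, h.z_cubed, inv_one]
  z_mul_y := (Commute.inv_left h.z_mul_y : Commute z⁻¹ y)
  z_mul_x_cubed := by
    rw [← h.x_inv, ← _root_.mul_inv_rev, inv_pow, h.x_mul_z_cubed, inv_one]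
  x_mul_y_pow_six := h.x_mul_y_pow_six

theorem lift_eq_one {r : FreeGroup (Fin 3)} (hr : r ∈ lambda2Rels) :
    FreeGroup.lift ![x, y, z] r = 1 := by
  rcases hr with rfl | rfl | rfl | rfl | rfl | rfl <;>
    simp only [map_pow, map_mul, map_inv, FreeGroup.lift_apply_of]
  · exact (sq x).trans h.x_mul_self
  · exact (sq y).trans h.y_mul_self
  · exact h.z_cubed
  · change z * y * z⁻¹ * y = 1
    rw [h.z_mul_y, mul_inv_cancel_right, h.y_mul_self]
  · exact h.z_mul_x_cubed
  · exact h.x_mul_y_pow_six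

/-- The homomorphism from `Λ₂` determined by three elements that satisfy its relations. -/
def toHom : Lambda2 →* G := PresentedGroup.toGroup fun _ => h.lift_eq_one

@[simp]
theorem toHom_X : h.toHom lambda2X = x := PresentedGroup.toGroup.of fun _ => h.lift_eq_one

@[simp]
theorem toHom_Y : h.toHom lambda2Y = y := PresentedGroup.toGroup.of fun _ => h.lift_eq_one

@[simp]
theorem toHom_Z : h.toHom lambda2Z = z := PresentedGroup.toGroup.of fun _ => h.lift_eq_one

end Lambda2Relations

/-- The automorphism of `Λ₂` that fixes `x` and `y` and inverts `z`. -/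
def invertZ : MulAut Lambda2 :=
  let f := Lambda2Relations.generators.inv_z.toHom
  have hf : f.comp f = MonoidHom.id _ := by apply lambda2_hom_ext <;> simp [f]
  MonoidHom.toMulEquiv f f hf hf

@[simp]
theorem invertZ_X : invertZ lambda2X = lambda2X := Lambda2Relations.generators.inv_z.toHom_X

@[simp]
theorem invertZ_Y : invertZ lambda2Y = lambda2Y := Lambda2Relations.generators.inv_z.toHom_Y

@[simp]
theorem invertZ_Z : invertZ lambda2Z = lambda2Z⁻¹ := Lambda2Relations.generators.inv_z.toHom_Z

theorem invertZ_mul_self : invertZ * invertZ = 1 := by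
  have h : (invertZ * invertZ).toMonoidHom = MonoidHom.id Lambda2 := by
    apply lambda2_hom_ext <;> simp
  exact MulEquiv.toMonoidHom_injective h

end Lambda2Relations

section Lambda2Extension

/-- The factors in `Λ₂` of the images of the simple reflections of `Λ₁` in
`InvolutionProduct invertZ_mul_self`. -/
def lambda2Reflection : Fin 4 → Lambda2 :=
  ![1, lambda2X, lambda2Y * lambda2X * lambda2Y, lambda2Z⁻¹]

theorem lambda2Reflection_mul_invertZ_self (i : Fin 4) :
    lambda2Reflection i * invertZ (lambda2Reflection i) = 1 := by
  have h := Lambda2Relations.generators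
  fin_cases i
  · simp [lambda2Reflection]
  · simp [lambda2Reflection, h.x_mul_self]
  · simpa [lambda2Reflection] using h.y_mul_x_mul_y_mul_self
  · simp [lambda2Reflection]

theorem lambda2Reflection_mul_invertZ_pow {i j : Fin 4} (hij : i < j) :
    (lambda2Reflection i * invertZ (lambda2Reflection j)) ^ lambda1Matrix i j = 1 := by
  have h := Lambda2Relations.generators
  rw [lambda1Matrix_apply]
  fin_cases i <;> fin_cases j <;> first | exact absurd hij (by decide) | skip
  · simp [lambda2Reflection, lambda1Exponent, sq, h.x_mul_self]
  · simpa [lambda2Reflection, lambda1Exponent, sq] using h.y_mul_x_mul_y_mul_self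
  · simp [lambda2Reflection, lambda1Exponent, h.z_cubed]
  · have hpow := (pow_mul (lambda2X * lambda2Y) 2 3).symm.trans h.x_mul_y_pow_six
    simpa [lambda2Reflection, lambda1Exponent, sq, mul_assoc] using hpow
  · simp [lambda2Reflection, lambda1Exponent, h.x_mul_z_cubed]
  · simp [lambda2Reflection, lambda1Exponent, h.y_mul_x_mul_y_mul_z, conj_pow, h.x_mul_z_cubed]

theorem lambda2Reflection_isLiftable :
    lambda1Matrix.IsLiftable fun i => (InvolutionProduct.incl (lambda2Reflection i) *
      InvolutionProduct.invol : InvolutionProduct invertZ_mul_self) := by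
  refine isLiftable_of_lt (fun i => ?_) fun i j hij => ?_
  · rw [InvolutionProduct.incl_mul_invol_mul_incl_mul_invol, lambda2Reflection_mul_invertZ_self,
      map_one]
  · rw [InvolutionProduct.incl_mul_invol_mul_incl_mul_invol, ← map_pow,
      lambda2Reflection_mul_invertZ_pow hij, map_one]

theorem starDiagConj_mul_self :
    (centerQuotientCongr starDiagConj : MulAut PSL(2, ZOmega)) * centerQuotientCongr starDiagConj =
      1 :=
  centerQuotientCongr_mul_self (Or.inr (Or.inr (Or.inr rfl)))

/-- The homomorphism from `PSL₂` to the extension of `Λ₂` by `invertZ` that is obtained by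
restricting the homomorphism of the Coxeter group `Λ₁` given by `lambda2Reflection`. -/
noncomputable def pslToLambda2 : PSL(2, ZOmega) →* InvolutionProduct invertZ_mul_self :=
  (lambda1Matrix.toCoxeterSystem.lift ⟨_, lambda2Reflection_isLiftable⟩).comp
    ((reflectionEquiv (hθ := starDiagConj_mul_self)).symm.toMonoidHom.comp InvolutionProduct.incl)

theorem pslToLambda2_reflection_mul (i j : Fin 4) :
    pslToLambda2 (pslMk (reflectionLinear i * starDiagConj (reflectionLinear j))) =
      InvolutionProduct.incl (lambda2Reflection i * invertZ (lambda2Reflection j)) := by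
  have hsymm : (reflectionEquiv (hθ := starDiagConj_mul_self)).symm
      (InvolutionProduct.incl (pslMk (reflectionLinear i * starDiagConj (reflectionLinear j)))) =
      lambda1Matrix.simple i * lambda1Matrix.simple j := by
    rw [MulEquiv.symm_apply_eq, ← reflection_mul, map_mul, reflectionEquiv_simple,
      reflectionEquiv_simple]
  have hsimple := lambda1Matrix.toCoxeterSystem.lift_apply_simple lambda2Reflection_isLiftable
  simp only [CoxeterMatrix.toCoxeterSystem_simple] at hsimple
  change lambda1Matrix.toCoxeterSystem.lift ⟨_, lambda2Reflection_isLiftable⟩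
    (reflectionEquiv.symm _) = _
  rw [hsymm, map_mul, hsimple, hsimple, InvolutionProduct.incl_mul_invol_mul_incl_mul_invol]

theorem pslToLambda2_genP : pslToLambda2 (pslMk genP) = InvolutionProduct.incl lambda2Z := by
  rw [← pslMk_neg, show -genP = reflectionLinear 0 * starDiagConj (reflectionLinear 3) by decide,
    pslToLambda2_reflection_mul]
  simp [lambda2Reflection]

theorem pslToLambda2_genQ : pslToLambda2 (pslMk genQ) =
    InvolutionProduct.incl (lambda2Y * (lambda2X * lambda2Z) * lambda2Y⁻¹) := by
  rw [show genQ = reflectionLinear 2 * starDiagConj (reflectionLinear 3) by decide,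
    pslToLambda2_reflection_mul, ← Lambda2Relations.generators.y_mul_x_mul_y_mul_z]
  simp [lambda2Reflection]

theorem pslToLambda2_genR :
    pslToLambda2 (pslMk genR) = InvolutionProduct.incl (lambda2X * lambda2Z) := by
  rw [show genR = reflectionLinear 1 * starDiagConj (reflectionLinear 3) by decide,
    pslToLambda2_reflection_mul]
  simp [lambda2Reflection]

theorem starAut_genP : starAut genP = genP := by decide

theorem starAut_genQ : starAut genQ = genR := by decide

theorem starAut_genR : starAut genR = genQ := by decide

theorem incl_Y_mul_pslToLambda2 (x : PSL(2, ZOmega)) :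
    InvolutionProduct.incl lambda2Y * pslToLambda2 x =
      pslToLambda2 (centerQuotientCongr starAut x) * InvolutionProduct.incl lambda2Y := by
  have h := Lambda2Relations.generators
  obtain ⟨A, rfl⟩ := pslMk_surjective x
  let f := (MulAut.conj (InvolutionProduct.incl lambda2Y)).toMonoidHom.comp
    (pslToLambda2.comp pslMk)
  let g := pslToLambda2.comp (pslMk.comp (starAut (R := ZOmega)).toMonoidHom)
  have htop : f.eqLocus g = ⊤ := by
    apply eq_top_of_genP_mem_of_genQ_mem_of_genR_mem <;>
      change InvolutionProduct.incl lambda2Y * pslToLambda2 (pslMk _) *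
        (InvolutionProduct.incl lambda2Y)⁻¹ = pslToLambda2 (pslMk (starAut _))
    · rw [starAut_genP, pslToLambda2_genP, ← map_inv, ← map_mul, ← map_mul, ← h.z_mul_y,
        mul_inv_cancel_right]
    · rw [starAut_genQ, pslToLambda2_genQ, pslToLambda2_genR, ← map_inv, ← map_mul, ← map_mul,
        ← mul_assoc, ← mul_assoc, h.y_mul_self, one_mul, mul_assoc _ lambda2Y⁻¹, h.y_inv,
        h.y_mul_self, mul_one]
    · rw [starAut_genR, pslToLambda2_genQ, pslToLambda2_genR, ← map_inv, ← map_mul, ← map_mul]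
  have hA : A ∈ f.eqLocus g := htop ▸ Subgroup.mem_top A
  exact mul_inv_eq_iff_eq_mul.mp hA

variable {hθ : (centerQuotientCongr starAut : MulAut PSL(2, ZOmega)) *
  centerQuotientCongr starAut = 1}

theorem starExtension_lambda2Relations : Lambda2Relations
    (InvolutionProduct.incl (hθ := hθ) (pslMk (genP * genR⁻¹))) InvolutionProduct.invol
    (InvolutionProduct.incl (pslMk genP)) := by
  have hpow : ∀ {A : SL(2, ZOmega)} {n : ℕ}, A ^ n = 1 ∨ A ^ n = -1 →
      InvolutionProduct.incl (hθ := hθ) (pslMk A) ^ n = 1 := by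
    intro A n h
    rw [← map_pow, ← map_pow, pslMk_eq_one_iff.mpr h, map_one]
  exact
    { x_mul_self := (sq _).symm.trans (hpow (by decide))
      y_mul_self := InvolutionProduct.invol_mul_self
      z_cubed := hpow (by decide)
      z_mul_y := by
        rw [InvolutionProduct.invol_mul_incl, centerQuotientCongr_pslMk, starAut_genP]
      z_mul_x_cubed := by
        rw [← map_mul, ← map_mul]
        exact hpow (by decide)
      x_mul_y_pow_six := by
        rw [pow_mul _ 2 3, sq, InvolutionProduct.incl_mul_invol_mul_incl_mul_invol,
          centerQuotientCongr_pslMk, ← map_mul]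
        exact hpow (by decide) }

theorem starExtension_toHom_injective :
    Function.Injective (starExtension_lambda2Relations (hθ := hθ)).toHom := by
  have hY : InvolutionProduct.incl (hθ := invertZ_mul_self) lambda2Y *
      InvolutionProduct.incl lambda2Y = 1 := by
    rw [← map_mul, Lambda2Relations.generators.y_mul_self, map_one]
  let F : InvolutionProduct hθ →* InvolutionProduct invertZ_mul_self :=
    InvolutionProduct.lift pslToLambda2 hY incl_Y_mul_pslToLambda2
  have hF : F.comp starExtension_lambda2Relations.toHom = InvolutionProduct.incl := by
    apply lambda2_hom_ext
    · simp only [F, MonoidHom.comp_apply, Lambda2Relations.toHom_X, InvolutionProduct.lift_incl,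
        map_mul, map_inv, pslToLambda2_genP, pslToLambda2_genR, _root_.mul_inv_rev,
        mul_inv_cancel_left]
      rw [← map_inv, Lambda2Relations.generators.x_inv]
    · rw [MonoidHom.comp_apply, Lambda2Relations.toHom_Y, InvolutionProduct.lift_invol]
    · rw [MonoidHom.comp_apply, Lambda2Relations.toHom_Z, InvolutionProduct.lift_incl,
        pslToLambda2_genP]
  refine Function.Injective.of_comp (f := F) ?_
  rw [← MonoidHom.coe_comp, hF]
  exact SemidirectProduct.inl_injective

theorem starExtension_toHom_surjective :
    Function.Surjective (starExtension_lambda2Relations (hθ := hθ)).toHom := by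
  have h := starExtension_lambda2Relations (hθ := hθ)
  rw [← MonoidHom.range_eq_top]
  set K := (starExtension_lambda2Relations (hθ := hθ)).toHom.range
  have hinvol : InvolutionProduct.invol ∈ K := ⟨_, h.toHom_Y⟩
  have hP : InvolutionProduct.incl (pslMk genP) ∈ K := ⟨_, h.toHom_Z⟩
  have hPR : InvolutionProduct.incl (pslMk (genP * genR⁻¹)) ∈ K := ⟨_, h.toHom_X⟩
  have hR : InvolutionProduct.incl (pslMk genR) ∈ K := by
    rwa [map_mul, map_mul, K.mul_mem_cancel_left hP, map_inv, map_inv, K.inv_mem_iff] at hPR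
  have hQ : InvolutionProduct.incl (pslMk genQ) ∈ K := by
    have hmem := K.mul_mem hinvol hR
    rwa [InvolutionProduct.invol_mul_incl, K.mul_mem_cancel_right hinvol,
      centerQuotientCongr_pslMk, starAut_genR] at hmem
  have htop := eq_top_of_genP_mem_of_genQ_mem_of_genR_mem
    (K := K.comap (InvolutionProduct.incl.comp pslMk)) hP hQ hR
  refine InvolutionProduct.eq_top_of_incl_mem (fun x => ?_) hinvol
  obtain ⟨A, rfl⟩ := pslMk_surjective x
  exact (Subgroup.eq_top_iff' _).mp htop A

theorem nonempty_lambda2_mulEquiv : Nonempty (Lambda2 ≃* InvolutionProduct hθ) :=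
  ⟨MulEquiv.ofBijective starExtension_lambda2Relations.toHom
    ⟨starExtension_toHom_injective, starExtension_toHom_surjective⟩⟩

end Lambda2Extension

section Classification

open ZOmega

/-- The isomorphism of special linear groups induced by an isomorphism of rings. -/
def slCongr {R S : Type*} [CommRing R] [CommRing S] (e : R ≃+* S) : SL(2, R) ≃* SL(2, S) :=
  MonoidHom.toMulEquiv (Matrix.SpecialLinearGroup.map (e : R →+* S))
    (Matrix.SpecialLinearGroup.map (e.symm : S →+* R))
    (MonoidHom.ext fun A => by apply sl_ext <;> simp)
    (MonoidHom.ext fun A => by apply sl_ext <;> simp)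

theorem nonempty_eisenstein_ringEquiv : Nonempty (Eisenstein ≃+* ZOmega) :=
  have : IsCyclotomicExtension {3} ℚ (CyclotomicField 3 ℚ) :=
    CyclotomicField.isCyclotomicExtension 3 ℚ
  nonempty_ringEquiv_ringOfIntegers

theorem exists_mem_outerReps_nonempty_mulEquiv {G : Type*} [Group G] {H : Subgroup G}
    (hindex : H.index = 2) (e : H ≃* PSL(2, ZOmega)) :
    ∃ θ ∈ outerReps ZOmega, ∃ hθ : (centerQuotientCongr θ : MulAut PSL(2, ZOmega)) *
      centerQuotientCongr θ = 1, Nonempty (G ≃* InvolutionProduct hθ) := by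
  obtain ⟨_, ⟨θ, hθ, rfl⟩, h⟩ := exists_mem_involutionProduct hindex center_psl_eq_bot e
    (S := centerQuotientCongr '' outerReps ZOmega)
    (by rintro _ ⟨θ, hθ, rfl⟩; exact centerQuotientCongr_mul_self hθ) fun φ => by
      obtain ⟨γ, θ, hθ, hφ⟩ := exists_eq_conj_mul_centerQuotientCongr φ
      exact ⟨γ, _, Set.mem_image_of_mem _ hθ, hφ⟩
  exact ⟨θ, hθ, h⟩

end Classification

end BianchiPSL2

open BianchiPSL2

/-- Any group containing `PSL(2, ℤ[ω])` as a subgroup of index 2 is isomorphic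
to `PGL(2, ℤ[ω])`, `Λ₁`, `Λ₂`, or `PSL(2, ℤ[ω]) × ℤ/2ℤ`. -/
theorem up_from_bianchi_by_index_two (Δ : Type) [Group Δ] (H : Subgroup Δ)
    (hH : H.index = 2) (hiso : Nonempty (H ≃* PSL2 Eisenstein)) :
    Nonempty (Δ ≃* PGL2 Eisenstein) ∨ Nonempty (Δ ≃* Lambda1) ∨
      Nonempty (Δ ≃* Lambda2) ∨
      Nonempty (Δ ≃* PSL2 Eisenstein × Multiplicative (ZMod 2)) := by
  obtain ⟨r⟩ := nonempty_eisenstein_ringEquiv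
  let p : PSL2 Eisenstein ≃* PSL2 ZOmega := centerQuotientCongr (slCongr r)
  let q : PGL2 Eisenstein ≃* PGL2 ZOmega :=
    centerQuotientCongr (Units.mapEquiv (r.mapMatrix (m := Fin 2)).toMulEquiv)
  obtain ⟨e⟩ := hiso
  obtain ⟨θ, hθ, h, ⟨f⟩⟩ := exists_mem_outerReps_nonempty_mulEquiv hH (e.trans p)
  rcases hθ with rfl | rfl | rfl | rfl
  · obtain ⟨g⟩ := InvolutionProduct.nonempty_mulEquiv_prod (hθ := h) centerQuotientCongr_one
    exact Or.inr <| Or.inr <| Or.inr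
      ⟨(f.trans g).trans (p.symm.prodCongr (MulEquiv.refl _))⟩
  · obtain ⟨g⟩ := nonempty_pgl_mulEquiv h
    exact Or.inl ⟨(f.trans g.symm).trans q.symm⟩
  · obtain ⟨g⟩ := nonempty_lambda2_mulEquiv (hθ := h)
    exact Or.inr <| Or.inr <| Or.inl ⟨f.trans g.symm⟩
  · obtain ⟨g⟩ := nonempty_lambda1_mulEquiv
    exact Or.inr <| Or.inl ⟨f.trans (reflectionEquiv.symm.trans g.symm)⟩
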